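/- arXiv:2406.10195 — 6 statements merged into one kernel-verified Lean document; each statement's English description precedes it below -/
import Mathlib

section
/- A tensor sequence A_1, …, A_N generates a matrix-product unitary if and only if for every string (α_1, …, α_N) ∈ {0, 1, …, d²−1}^N the product S_{α_N}^{(N)} ⋯ S_{α_2}^{(2)} S_{α_1}^{(1)} (a 1×1 matrix, since D_0 = D_N = 1, identified with a scalar) equals 1 when all α_k = 0, and equals 0 otherwise. -/
open Matrix Kronecker

noncomputable section

/-- The partial matrix product `A_k^{i_k j_k} ⋯ A_1^{i_1 j_1}` of a tensor sequence
(sites are 0-based: `A m` is the tensor of site `m+1`). -/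
def mpoProd (d : ℕ) (D : ℕ → ℕ)
    (A : ∀ k : ℕ, Fin d → Fin d → Matrix (Fin (D (k + 1))) (Fin (D k)) ℂ) :
    ∀ N : ℕ, (Fin N → Fin d) → (Fin N → Fin d) → Matrix (Fin (D N)) (Fin (D 0)) ℂ
  | 0, _, _ => 1
  | (N + 1), i, j =>
      A N (i (Fin.last N)) (j (Fin.last N)) *
        mpoProd d D A N (fun t => i t.castSucc) (fun t => j t.castSucc)

/-- The matrix-product operator generated by the tensor sequence, acting on `(ℂ^d)^{⊗N}`;
since `D 0 = D N = 1`, the `1 × 1` boundary matrix is identified with a scalar by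
summing its entries. -/
def mpoOp (d : ℕ) (D : ℕ → ℕ)
    (A : ∀ k : ℕ, Fin d → Fin d → Matrix (Fin (D (k + 1))) (Fin (D k)) ℂ) (N : ℕ) :
    Matrix (Fin N → Fin d) (Fin N → Fin d) ℂ :=
  Matrix.of fun i j => ∑ m, ∑ n, mpoProd d D A N i j m n

/-- `∑ i j j', M j' j • conj(A^{i j'}) ⊗ conj?  -- the building block
`Σ_{i,j,j'} (M)_{j'j} · conj(A^{ij'}) ⊗ A^{ij}` (Kronecker product, entrywise conjugate). -/
def Smat {d Dl Dr : ℕ} (A : Fin d → Fin d → Matrix (Fin Dl) (Fin Dr) ℂ)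
    (M : Matrix (Fin d) (Fin d) ℂ) : Matrix (Fin Dl × Fin Dl) (Fin Dr × Fin Dr) ℂ :=
  ∑ i, ∑ j, ∑ j', M j' j • (((A i j').map (starRingEnd ℂ)) ⊗ₖ (A i j))

/-- The transfer matrix `E^{(k+1)} = (1/d) Σ_{i,j} conj(A_k^{ij}) ⊗ A_k^{ij}`. -/
def Esite (d : ℕ) (D : ℕ → ℕ)
    (A : ∀ k : ℕ, Fin d → Fin d → Matrix (Fin (D (k + 1))) (Fin (D k)) ℂ) (k : ℕ) :
    Matrix (Fin (D (k + 1)) × Fin (D (k + 1))) (Fin (D k) × Fin (D k)) ℂ :=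
  ((d : ℂ))⁻¹ • Smat (A k) 1

/-- `S_α^{(k+1)}`, where `α = 0` carries the extra `1/d` factor (there `σ 0 = 𝟙`). -/
def Ssite (d : ℕ) (D : ℕ → ℕ)
    (A : ∀ k : ℕ, Fin d → Fin d → Matrix (Fin (D (k + 1))) (Fin (D k)) ℂ)
    (σ : Fin (d * d) → Matrix (Fin d) (Fin d) ℂ) (k : ℕ) (α : Fin (d * d)) :
    Matrix (Fin (D (k + 1)) × Fin (D (k + 1))) (Fin (D k) × Fin (D k)) ℂ :=
  (if (α : ℕ) = 0 then ((d : ℂ))⁻¹ else 1) • Smat (A k) (σ α)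

/-- The product `S_{α_N}^{(N)} ⋯ S_{α_1}^{(1)}`. -/
def Schain (d : ℕ) (D : ℕ → ℕ)
    (A : ∀ k : ℕ, Fin d → Fin d → Matrix (Fin (D (k + 1))) (Fin (D k)) ℂ)
    (σ : Fin (d * d) → Matrix (Fin d) (Fin d) ℂ) :
    ∀ N : ℕ, (Fin N → Fin (d * d)) →
      Matrix (Fin (D N) × Fin (D N)) (Fin (D 0) × Fin (D 0)) ℂ
  | 0, _ => 1
  | (N + 1), α =>
      Ssite d D A σ N (α (Fin.last N)) * Schain d D A σ N (fun t => α t.castSucc)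

/-- `ρ^{(N)} = E^{(N)} ⋯ E^{(1)}`. -/
def rhoChain (d : ℕ) (D : ℕ → ℕ)
    (A : ∀ k : ℕ, Fin d → Fin d → Matrix (Fin (D (k + 1))) (Fin (D k)) ℂ) :
    ∀ N : ℕ, Matrix (Fin (D N) × Fin (D N)) (Fin (D 0) × Fin (D 0)) ℂ
  | 0 => 1
  | (N + 1) => Esite d D A N * rhoChain d D A N

/-- `𝒮^{(N)}`: the real span of all products `S_{α_N}^{(N)} ⋯ S_{α_1}^{(1)}` with some
`α_t ≠ 0`. -/
def Sspan (d : ℕ) (D : ℕ → ℕ)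
    (A : ∀ k : ℕ, Fin d → Fin d → Matrix (Fin (D (k + 1))) (Fin (D k)) ℂ)
    (σ : Fin (d * d) → Matrix (Fin d) (Fin d) ℂ) (N : ℕ) :
    Submodule ℝ (Matrix (Fin (D N) × Fin (D N)) (Fin (D 0) × Fin (D 0)) ℂ) :=
  Submodule.span ℝ
    {M | ∃ α : Fin N → Fin (d * d), (∃ t, (α t : ℕ) ≠ 0) ∧ M = Schain d D A σ N α}

/-- Identification of a vector in `ℂ^D ⊗ ℂ^D` (here: a `D² × 1` matrix, the column index
ranging over the trivial type `Fin (D 0) × Fin (D 0)` with `D 0 = 1`) with a `D × D`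
matrix. -/
def matHat {Dk D0 : ℕ} (M : Matrix (Fin Dk × Fin Dk) (Fin D0 × Fin D0) ℂ) :
    Matrix (Fin Dk) (Fin Dk) ℂ :=
  Matrix.of fun m n => ∑ q, M (m, n) q

/-!
Pairing `Uᴴ * U` entrywise with a product operator `M_N ⊗ ⋯ ⊗ M_1` is multilinear in the factors
`M_k`, and for `M_k = σ_{α_k}`, with `𝟙 / d` in place of `σ_0`, it gives exactly the scalar
`S_{α_N}^{(N)} ⋯ S_{α_1}^{(1)}`. For `Uᴴ * U = 1` the pairing is `∏ k, Tr M_k`, which is `1` when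
all `α_k` vanish and `0` otherwise. Conversely, the `σ_α` span the local matrix algebra, so a
multilinear map is determined by its values on them, and `Uᴴ * U` is recovered from the pairings
with products of matrix units.
-/

theorem sum_univ_snoc {N : ℕ} {β V : Type*} [Fintype β] [AddCommMonoid V]
    (F : (Fin (N + 1) → β) → V) :
    ∑ f, F f = ∑ b : β, ∑ g : Fin N → β, F (Fin.snoc (α := fun _ => β) g b) := by
  rw [← Fintype.sum_prod_type']
  exact ((Fin.snocEquiv fun _ : Fin (N + 1) => β).sum_comp F).symm

theorem matrix_sum_mul_sum {R l m n β γ : Type*} [NonUnitalNonAssocSemiring R] [Fintype m]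
    [Fintype β] [Fintype γ] (f : β → Matrix l m R) (g : γ → Matrix m n R) :
    (∑ b, f b) * ∑ c, g c = ∑ b, ∑ c, f b * g c := by
  simp_rw [Matrix.sum_mul, Matrix.mul_sum]

section EntrySum

variable {R l m n o : Type*} [CommSemiring R] [Fintype l] [Fintype m] [Fintype n] [Fintype o]

/-- The sum of all entries of a matrix, that is, its contraction with all-ones vectors on both
sides; this identifies a `1 × 1` matrix with a scalar. -/
def entrySum : Matrix m n R →ₗ[R] R :=
  ∑ p, ∑ q, Matrix.entryLinearMap R R p q

theorem entrySum_apply (M : Matrix m n R) : entrySum M = ∑ p, ∑ q, M p q := by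
  simp [entrySum]

theorem entrySum_kronecker (M : Matrix l m R) (P : Matrix n o R) :
    entrySum (M ⊗ₖ P) = entrySum M * entrySum P := by
  simp only [entrySum_apply, Fintype.sum_prod_type, Matrix.kroneckerMap_apply, Finset.sum_mul_sum]

theorem entrySum_map {S : Type*} [CommSemiring S] (f : R →+* S) (M : Matrix m n R) :
    entrySum (M.map f) = f (entrySum M) := by
  simp only [entrySum_apply, Matrix.map_apply, map_sum]

end EntrySum

section ProductPairing

variable {R ι : Type*} [CommSemiring R] [Fintype ι] [DecidableEq ι] {m n : ι → Type*}
  [∀ k, Fintype (m k)] [∀ k, Fintype (n k)]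

/-- The entrywise bilinear pairing `∑ a b, X a b * (⨂ k, M k) a b` of a matrix `X` on a product
index set with the product operator `⨂ k, M k`, as a multilinear map in the local factors `M k`. -/
def productPairing (X : Matrix (∀ k, m k) (∀ k, n k) R) :
    MultilinearMap R (fun k => Matrix (m k) (n k) R) R :=
  ∑ a, ∑ b, X a b • (MultilinearMap.mkPiAlgebra R ι R).compLinearMap
    fun k => Matrix.entryLinearMap R R (a k) (b k)

theorem productPairing_apply (X : Matrix (∀ k, m k) (∀ k, n k) R)
    (M : ∀ k, Matrix (m k) (n k) R) :
    productPairing X M = ∑ a, ∑ b, X a b * ∏ k, M k (a k) (b k) := by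
  simp [productPairing]

theorem productPairing_one [∀ k, DecidableEq (n k)] (M : ∀ k, Matrix (n k) (n k) R) :
    productPairing 1 M = ∏ k, (M k).trace := by
  simp [productPairing_apply, Matrix.one_apply, Matrix.trace, Finset.prod_univ_sum]

theorem productPairing_single [∀ k, DecidableEq (m k)] [∀ k, DecidableEq (n k)]
    (X : Matrix (∀ k, m k) (∀ k, n k) R) (a : ∀ k, m k) (b : ∀ k, n k) :
    productPairing X (fun k => Matrix.single (a k) (b k) 1) = X a b := by
  have prod_single (a' : ∀ k, m k) (b' : ∀ k, n k) :
      ∏ k, Matrix.single (a k) (b k) (1 : R) (a' k) (b' k) =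
        if a = a' then if b = b' then 1 else 0 else 0 := by
    simp only [Matrix.single_apply, Fintype.prod_boole, forall_and, ← funext_iff, ← ite_and]
  simp [productPairing_apply, prod_single]

theorem productPairing_injective :
    Function.Injective (productPairing : Matrix (∀ k, m k) (∀ k, n k) R → _) := by
  classical
  intro X Y hXY
  ext a b
  rw [← productPairing_single X, hXY, productPairing_single]

theorem eq_of_productPairing_eq_of_span_eq_top {κ : ι → Type*}
    {τ : ∀ k, κ k → Matrix (m k) (n k) R} (hτ : ∀ k, Submodule.span R (Set.range (τ k)) = ⊤)
    {X Y : Matrix (∀ k, m k) (∀ k, n k) R}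
    (h : ∀ α : ∀ k, κ k,
      productPairing X (fun k => τ k (α k)) = productPairing Y (fun k => τ k (α k))) :
    X = Y :=
  productPairing_injective <| MultilinearMap.ext_of_span_eq_top hτ h

end ProductPairing

section TransferChain

variable {d : ℕ} (D : ℕ → ℕ)
  (A : ∀ k : ℕ, Fin d → Fin d → Matrix (Fin (D (k + 1))) (Fin (D k)) ℂ)
  (σ : Fin (d * d) → Matrix (Fin d) (Fin d) ℂ)

/-- The local operators `σ` with the `0`-th one divided by `d`, which absorbs the prefactor `1/d`
of `S_0 = E`: when `σ 0 = 𝟙` and the other `σ α` are traceless, their traces are `δ_{α 0}`. -/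
def normalizedOp (α : Fin (d * d)) : Matrix (Fin d) (Fin d) ℂ :=
  (if (α : ℕ) = 0 then (d : ℂ)⁻¹ else 1) • σ α

variable {σ} in
theorem trace_normalizedOp (hσ0 : ∀ α : Fin (d * d), (α : ℕ) = 0 → σ α = 1)
    (hσtr : ∀ α : Fin (d * d), (α : ℕ) ≠ 0 → (σ α).trace = 0) (α : Fin (d * d)) :
    (normalizedOp σ α).trace = if (α : ℕ) = 0 then 1 else 0 := by
  have hd : (d : ℂ) ≠ 0 := Nat.cast_ne_zero.mpr (Nat.pos_of_mul_pos_left α.pos).ne'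
  by_cases h : (α : ℕ) = 0
  · simp [normalizedOp, h, hσ0 α h, hd]
  · simp [normalizedOp, h, hσtr α h]

theorem span_range_normalizedOp :
    Submodule.span ℂ (Set.range (normalizedOp σ)) = Submodule.span ℂ (Set.range σ) := by
  have weight_ne_zero (α : Fin (d * d)) : (if (α : ℕ) = 0 then (d : ℂ)⁻¹ else 1) ≠ 0 := by
    have hd : d ≠ 0 := (Nat.pos_of_mul_pos_left α.pos).ne'
    split_ifs <;> simp [hd]
  refine le_antisymm (Submodule.span_le.mpr ?_) (Submodule.span_le.mpr ?_)
  · rintro _ ⟨α, rfl⟩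
    exact Submodule.smul_mem _ _ (Submodule.subset_span ⟨α, rfl⟩)
  · rintro _ ⟨α, rfl⟩
    exact (Submodule.smul_mem_iff _ (weight_ne_zero α)).mp (Submodule.subset_span ⟨α, rfl⟩)

theorem Ssite_eq_Smat_normalizedOp (k : ℕ) (α : Fin (d * d)) :
    Ssite d D A σ k α = Smat (A k) (normalizedOp σ α) := by
  simp only [Ssite, Smat, normalizedOp, Finset.smul_sum, smul_smul, Matrix.smul_apply,
    smul_eq_mul]

theorem Schain_eq_sum_kronecker (N : ℕ) (α : Fin N → Fin (d * d)) :
    Schain d D A σ N α = ∑ i, ∑ j, ∑ j', (∏ t, normalizedOp σ (α t) (j' t) (j t)) •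
      ((mpoProd d D A N i j').map (starRingEnd ℂ) ⊗ₖ mpoProd d D A N i j) := by
  induction N with
  | zero => simp [Schain, mpoProd]
  | succ N ih =>
    rw [Schain, ih, Ssite_eq_Smat_normalizedOp, Smat, sum_univ_snoc, matrix_sum_mul_sum]
    refine Finset.sum_congr rfl fun a _ => Finset.sum_congr rfl fun i _ => ?_
    rw [sum_univ_snoc, matrix_sum_mul_sum]
    refine Finset.sum_congr rfl fun b _ => Finset.sum_congr rfl fun j _ => ?_
    rw [sum_univ_snoc, matrix_sum_mul_sum]
    refine Finset.sum_congr rfl fun b' _ => Finset.sum_congr rfl fun j' _ => ?_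
    simp only [Fin.prod_univ_castSucc, mpoProd, Fin.snoc_castSucc, Fin.snoc_last,
      Matrix.map_mul, Matrix.mul_kronecker_mul, Matrix.smul_mul, Matrix.mul_smul, smul_smul]

theorem entrySum_Schain (N : ℕ) (α : Fin N → Fin (d * d)) :
    entrySum (Schain d D A σ N α) =
      productPairing ((mpoOp d D A N)ᴴ * mpoOp d D A N)
        (fun t => normalizedOp σ (α t)) := by
  have mpoOp_eq (i j) : mpoOp d D A N i j = entrySum (mpoProd d D A N i j) := by
    rw [entrySum_apply]; rfl
  simp only [Schain_eq_sum_kronecker, map_sum, map_smul, entrySum_kronecker, entrySum_map,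
    ← mpoOp_eq, smul_eq_mul, productPairing_apply, Matrix.mul_apply,
    Matrix.conjTranspose_apply, Finset.sum_mul, starRingEnd_apply]
  rw [Finset.sum_comm_cycle]
  refine Finset.sum_congr rfl fun j' _ => ?_
  rw [Finset.sum_comm]
  exact Finset.sum_congr rfl fun j _ => Finset.sum_congr rfl fun i _ => mul_comm _ _

variable {σ} in
theorem productPairing_one_normalizedOp
    (hσ0 : ∀ α : Fin (d * d), (α : ℕ) = 0 → σ α = 1)
    (hσtr : ∀ α : Fin (d * d), (α : ℕ) ≠ 0 → (σ α).trace = 0)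
    {N : ℕ} (α : Fin N → Fin (d * d)) :
    productPairing 1 (fun t => normalizedOp σ (α t)) =
      if ∀ t, (α t : ℕ) = 0 then 1 else 0 := by
  simp [productPairing_one, trace_normalizedOp hσ0 hσtr, Finset.prod_ite_zero]

end TransferChain

theorem stmt_0_general (N d : ℕ) (D : ℕ → ℕ)
    (A : ∀ k : ℕ, Fin d → Fin d → Matrix (Fin (D (k + 1))) (Fin (D k)) ℂ)
    (σ : Fin (d * d) → Matrix (Fin d) (Fin d) ℂ)
    (hσ0 : ∀ α : Fin (d * d), (α : ℕ) = 0 → σ α = 1)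
    (hσtr : ∀ α : Fin (d * d), (α : ℕ) ≠ 0 → (σ α).trace = 0)
    (hσspan : Submodule.span ℂ (Set.range σ) = ⊤) :
    mpoOp d D A N ∈ Matrix.unitaryGroup (Fin N → Fin d) ℂ ↔
      ∀ α : Fin N → Fin (d * d),
        (∑ p, ∑ q, Schain d D A σ N α p q) =
          (if ∀ t, (α t : ℕ) = 0 then 1 else 0) := by
  simp only [← entrySum_apply, entrySum_Schain, ← productPairing_one_normalizedOp hσ0 hσtr,
    Matrix.mem_unitaryGroup_iff', Matrix.star_eq_conjTranspose]
  refine ⟨fun hU α => by rw [hU], fun h => ?_⟩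
  exact eq_of_productPairing_eq_of_span_eq_top
    (fun _ => (span_range_normalizedOp σ).trans hσspan) h

/-- A tensor sequence `A_1, …, A_N` generates a matrix-product unitary
if and only if every product `S_{α_N}^{(N)} ⋯ S_{α_1}^{(1)}` (a `1 × 1` matrix, identified
with a scalar by summing its entries) equals `1` when all `α_k = 0` and `0` otherwise. -/
theorem stmt_0 (N d : ℕ) (hN : 1 ≤ N) (hd : 2 ≤ d) (D : ℕ → ℕ)
    (hD0 : D 0 = 1) (hDN : D N = 1) (hDpos : ∀ k, k ≤ N → 1 ≤ D k)
    (A : ∀ k : ℕ, Fin d → Fin d → Matrix (Fin (D (k + 1))) (Fin (D k)) ℂ)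
    (σ : Fin (d * d) → Matrix (Fin d) (Fin d) ℂ)
    (hσ0 : ∀ α : Fin (d * d), (α : ℕ) = 0 → σ α = 1)
    (hσherm : ∀ α : Fin (d * d), (α : ℕ) ≠ 0 → (σ α).IsHermitian)
    (hσtr : ∀ α : Fin (d * d), (α : ℕ) ≠ 0 → (σ α).trace = 0)
    (hσorth : ∀ α β : Fin (d * d), (α : ℕ) ≠ 0 → (β : ℕ) ≠ 0 →
      (σ α * σ β).trace = if α = β then 1 else 0)
    (hσbasis : Submodule.span ℂ (Set.range σ) = ⊤) :
    mpoOp d D A N ∈ Matrix.unitaryGroup (Fin N → Fin d) ℂ ↔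
      ∀ α : Fin N → Fin (d * d),
        (∑ p, ∑ q, Schain d D A σ N α p q) =
          (if ∀ t, (α t : ℕ) = 0 then 1 else 0) :=
  stmt_0_general N d D A σ hσ0 hσtr hσbasis

end
end

section
/- A tensor sequence A_1, …, A_N generates a matrix-product unitary if and only if ρ^{(N)} = 1 (as a scalar, since D_N = 1) and 𝒮^{(N)} = {0}. -/
open Matrix Kronecker

noncomputable section

/-!
Blocking the `N` sites into one turns a product of the site matrices `S_α` into a single transfer
matrix with `σ_{α_1} ⊗ ⋯ ⊗ σ_{α_N}` inserted. When both boundary bonds are trivial, that transfer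
matrix is the scalar `Tr ((U†U)ᵀ (σ_{α_1} ⊗ ⋯ ⊗ σ_{α_N}))`, up to a nonzero factor. The Kronecker
products of the `σ_α` span all operators, and all of them except the identity are traceless, so
`U†U = 1` exactly when these scalars agree with their values at the identity: `Tr (U†U) = d ^ N`
for `α = 0`, and `0` for every other `α`.
-/

section PiKronecker

variable {R ι m n : Type*} [CommSemiring R] [Fintype ι]

/-- The Kronecker product `⨂ₜ M t` of a finite family of matrices of equal shape, as a multilinear
map; its rows and columns are indexed by families of rows and columns of the factors. -/
def piKronecker : MultilinearMap R (fun _ : ι => Matrix m n R) (Matrix (ι → m) (ι → n) R) :=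
  (Matrix.ofLinearEquiv R).toLinearMap.compMultilinearMap <|
    .pi fun i => .pi fun j =>
      (MultilinearMap.mkPiAlgebra R ι R).compLinearMap fun t => entryLinearMap R R (i t) (j t)

theorem piKronecker_apply (M : ι → Matrix m n R) (i : ι → m) (j : ι → n) :
    piKronecker M i j = ∏ t, M t (i t) (j t) := by
  simp [piKronecker]

theorem piKronecker_single [DecidableEq m] [DecidableEq n] (i : ι → m) (j : ι → n) :
    piKronecker (fun t => single (i t) (j t) (1 : R)) = single i j 1 := by
  ext i' j'
  simp only [piKronecker_apply, single_apply, Fintype.prod_ite_zero, Finset.prod_const_one,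
    funext_iff, forall_and]

theorem piKronecker_one [DecidableEq n] :
    piKronecker (fun _ : ι => (1 : Matrix n n R)) = 1 := by
  ext i j
  simp only [piKronecker_apply, one_apply, Fintype.prod_ite_zero, Finset.prod_const_one,
    funext_iff]

theorem trace_piKronecker [Fintype n] [DecidableEq ι] (M : ι → Matrix n n R) :
    (piKronecker M).trace = ∏ t, (M t).trace := by
  simp only [trace, diag_apply, piKronecker_apply, Fintype.prod_sum]

theorem piKronecker_fin_succ {N : ℕ} (M : Fin (N + 1) → Matrix m n R) :
    piKronecker M = (M (Fin.last N) ⊗ₖ piKronecker fun t => M t.castSucc).submatrix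
      (Fin.snocEquiv fun _ => m).symm (Fin.snocEquiv fun _ => n).symm := by
  ext i j
  simp only [piKronecker_apply, Fin.prod_univ_castSucc, submatrix_apply, kronecker_apply,
    Fin.snocEquiv_symm_apply, Fin.init, mul_comm]

theorem ext_iff_trace_mul_piKronecker [Fintype m] [Fintype n] [DecidableEq ι] {κ : Type*}
    {σ : κ → Matrix n m R} (hσ : Submodule.span R (Set.range σ) = ⊤)
    {W W' : Matrix (ι → m) (ι → n) R} :
    W = W' ↔ ∀ α : ι → κ, (W * piKronecker fun t => σ (α t)).trace =
      (W' * piKronecker fun t => σ (α t)).trace := by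
  classical
  refine ⟨fun h _ => by rw [h], fun h => ?_⟩
  let pairing (V : Matrix (ι → m) (ι → n) R) : MultilinearMap R (fun _ : ι => Matrix n m R) R :=
    (traceLinearMap (ι → m) R R ∘ₗ mulLeftLinearMap (ι → m) R V).compMultilinearMap piKronecker
  have pairing_eq : pairing W = pairing W' :=
    MultilinearMap.ext_of_span_eq_top (g := fun _ => σ) (fun _ => hσ) h
  ext i j
  have entry_eq := DFunLike.congr_fun pairing_eq fun t => single (j t) (i t) 1
  simpa [pairing, piKronecker_single, trace_mul_single] using entry_eq

theorem eq_one_iff_trace_mul_piKronecker [Fintype n] [DecidableEq n] [DecidableEq ι] {κ : Type*}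
    {σ : κ → Matrix n n R} {o : κ} (hone : σ o = 1) (htrace : ∀ a ≠ o, (σ a).trace = 0)
    (hσ : Submodule.span R (Set.range σ) = ⊤) {W : Matrix (ι → n) (ι → n) R} :
    W = 1 ↔ W.trace = Fintype.card (ι → n) ∧
      ∀ α : ι → κ, (∃ t, α t ≠ o) → (W * piKronecker fun t => σ (α t)).trace = 0 := by
  have trace_eq_zero (α : ι → κ) (hα : ∃ t, α t ≠ o) :
      (piKronecker fun t => σ (α t)).trace = 0 := by
    obtain ⟨t, ht⟩ := hα
    rw [trace_piKronecker]
    exact Finset.prod_eq_zero (Finset.mem_univ t) (htrace _ ht)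
  constructor
  · rintro rfl
    exact ⟨trace_one, fun α hα => by rw [one_mul, trace_eq_zero α hα]⟩
  · rintro ⟨htr, hzero⟩
    refine (ext_iff_trace_mul_piKronecker hσ).2 fun α => ?_
    by_cases hα : ∃ t, α t ≠ o
    · rw [hzero α hα, one_mul, trace_eq_zero α hα]
    · push Not at hα
      simp only [hα, hone, piKronecker_one, mul_one, htr, trace_one]

end PiKronecker

section TransferMatrix

variable {R ι κ l m r : Type*} [CommSemiring R] [StarRing R] [Fintype ι] [Fintype κ]

/-- The transfer matrix of an operator-valued matrix `B` with physical indices in `ι`, with `M`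
inserted between the input legs of `B` and of its conjugate. At `ι = Fin d` this is `Smat`; other
index types describe several sites blocked into one. -/
def transferMatrix (B : ι → ι → Matrix l r R) (M : Matrix ι ι R) : Matrix (l × l) (r × r) R :=
  ∑ i, ∑ j, ∑ j', M j' j • ((B i j').map (starRingEnd R) ⊗ₖ B i j)

theorem transferMatrix_apply (B : ι → ι → Matrix l r R) (M : Matrix ι ι R) (p : l × l)
    (q : r × r) :
    transferMatrix B M p q =
      (((of fun i j => B i j p.1 q.1)ᴴ * of fun i j => B i j p.2 q.2)ᵀ * M).trace := by
  simp only [transferMatrix, trace, diag_apply, mul_apply, transpose_apply, conjTranspose_apply,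
    Matrix.sum_apply, Matrix.smul_apply, kroneckerMap_apply, map_apply, of_apply, smul_eq_mul,
    Finset.sum_mul, starRingEnd_apply]
  rw [Finset.sum_comm]
  refine Finset.sum_congr rfl fun j _ => ?_
  rw [Finset.sum_comm]
  exact Finset.sum_congr rfl fun j' _ => Finset.sum_congr rfl fun i _ => mul_comm _ _

theorem transferMatrix_submatrix (e : κ ≃ ι) (B : ι → ι → Matrix l r R) (M : Matrix ι ι R) :
    transferMatrix (fun i j => B (e i) (e j)) (M.submatrix e e) = transferMatrix B M := by
  simp only [transferMatrix, submatrix_apply, ← e.sum_comp]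

theorem transferMatrix_mul_transferMatrix [Fintype m] (A : ι → ι → Matrix l m R)
    (B : κ → κ → Matrix m r R) (M : Matrix ι ι R) (M' : Matrix κ κ R) :
    transferMatrix A M * transferMatrix B M' =
      transferMatrix (fun i j => A i.1 j.1 * B i.2 j.2) (M ⊗ₖ M') := by
  have mul_term (i j j') (k s s') :
      (M j' j • ((A i j').map (starRingEnd R) ⊗ₖ A i j)) *
          (M' s' s • ((B k s').map (starRingEnd R) ⊗ₖ B k s)) =
        (M j' j * M' s' s) •
          ((A i j' * B k s').map (starRingEnd R) ⊗ₖ (A i j * B k s)) := by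
    rw [Matrix.smul_mul, Matrix.mul_smul, smul_smul, ← mul_kronecker_mul, Matrix.map_mul]
  simp only [transferMatrix, Fintype.sum_prod_type, kronecker_apply, ← mul_term, ← Matrix.mul_sum,
    ← Matrix.sum_mul]

end TransferMatrix

section TensorSequence

variable {d N : ℕ} {D : ℕ → ℕ}
  {A : ∀ k : ℕ, Fin d → Fin d → Matrix (Fin (D (k + 1))) (Fin (D k)) ℂ}
  {σ : Fin (d * d) → Matrix (Fin d) (Fin d) ℂ}

theorem mpoOp_eq_mpoProd_default [Unique (Fin (D 0))] [Unique (Fin (D N))] :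
    mpoOp d D A N = of fun i j => mpoProd d D A N i j default default := by
  simp only [mpoOp, Fintype.sum_unique]

theorem Smat_eq_transferMatrix {l r : ℕ} (B : Fin d → Fin d → Matrix (Fin l) (Fin r) ℂ)
    (M : Matrix (Fin d) (Fin d) ℂ) : Smat B M = transferMatrix B M :=
  rfl

theorem Schain_eq_smul_transferMatrix (α : Fin N → Fin (d * d)) :
    Schain d D A σ N α = (∏ t, if (α t : ℕ) = 0 then (d : ℂ)⁻¹ else 1) •
      transferMatrix (mpoProd d D A N) (piKronecker fun t => σ (α t)) := by
  induction N with
  | zero => simp [Schain, transferMatrix, mpoProd, piKronecker_apply]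
  | succ N ih =>
    have prepend_site : Smat (A N) (σ (α (Fin.last N))) *
        transferMatrix (mpoProd d D A N) (piKronecker fun t => σ (α t.castSucc)) =
        transferMatrix (mpoProd d D A (N + 1)) (piKronecker fun t => σ (α t)) := by
      rw [piKronecker_fin_succ, Smat_eq_transferMatrix, transferMatrix_mul_transferMatrix]
      exact (transferMatrix_submatrix (Fin.snocEquiv fun _ => Fin d).symm _ _).symm
    rw [Schain, Ssite, ih, Matrix.smul_mul, Matrix.mul_smul, smul_smul, prepend_site,
      Fin.prod_univ_castSucc, mul_comm]

theorem Schain_apply_eq_trace [Unique (Fin (D 0))] [Unique (Fin (D N))]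
    (α : Fin N → Fin (d * d)) (p : Fin (D N) × Fin (D N)) (q : Fin (D 0) × Fin (D 0)) :
    Schain d D A σ N α p q = (∏ t, if (α t : ℕ) = 0 then (d : ℂ)⁻¹ else 1) *
      ((star (mpoOp d D A N) * mpoOp d D A N)ᵀ * piKronecker fun t => σ (α t)).trace := by
  rw [Subsingleton.elim p default, Subsingleton.elim q default, Schain_eq_smul_transferMatrix,
    Matrix.smul_apply, transferMatrix_apply, mpoOp_eq_mpoProd_default]
  rfl

theorem Schain_eq_zero_iff [NeZero d] [Unique (Fin (D 0))] [Unique (Fin (D N))]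
    (α : Fin N → Fin (d * d)) :
    Schain d D A σ N α = 0 ↔
      ((star (mpoOp d D A N) * mpoOp d D A N)ᵀ * piKronecker fun t => σ (α t)).trace = 0 := by
  have weight_ne_zero : (∏ t, if (α t : ℕ) = 0 then (d : ℂ)⁻¹ else 1) ≠ 0 :=
    Finset.prod_ne_zero_iff.2 fun t _ => by split_ifs <;> simp [NeZero.ne d]
  simp only [← Matrix.ext_iff, Schain_apply_eq_trace, Matrix.zero_apply, mul_eq_zero,
    weight_ne_zero, false_or, forall_const]

theorem rhoChain_eq_Schain [NeZero d] (hone : σ 0 = 1) :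
    rhoChain d D A N = Schain d D A σ N fun _ => 0 := by
  induction N with
  | zero => rfl
  | succ N ih => simp [rhoChain, Schain, ih, Esite, Ssite, hone]

theorem sum_rhoChain_eq_one_iff [NeZero d] [Unique (Fin (D 0))] [Unique (Fin (D N))]
    (hone : σ 0 = 1) :
    ∑ p, ∑ q, rhoChain d D A N p q = 1 ↔
      (star (mpoOp d D A N) * mpoOp d D A N)ᵀ.trace = Fintype.card (Fin N → Fin d) := by
  rw [rhoChain_eq_Schain hone]
  simp only [Fintype.sum_prod_type, Fintype.sum_unique, Schain_apply_eq_trace, hone,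
    piKronecker_one, mul_one, Fin.val_zero, if_true, Finset.prod_const, Finset.card_univ,
    Fintype.card_fin, Fintype.card_fun, Nat.cast_pow, inv_pow]
  rw [inv_mul_eq_one₀ (pow_ne_zero _ (NeZero.ne (d : ℂ))), eq_comm]

theorem Sspan_eq_bot_iff :
    Sspan d D A σ N = ⊥ ↔
      ∀ α : Fin N → Fin (d * d), (∃ t, (α t : ℕ) ≠ 0) → Schain d D A σ N α = 0 := by
  rw [Sspan, Submodule.span_eq_bot]
  constructor
  · intro h α hα
    exact h _ ⟨α, hα, rfl⟩
  · rintro h _ ⟨α, hα, rfl⟩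
    exact h α hα

end TensorSequence

theorem stmt_1_general (N d : ℕ) [NeZero d] (D : ℕ → ℕ) (hD0 : D 0 = 1) (hDN : D N = 1)
    (A : ∀ k : ℕ, Fin d → Fin d → Matrix (Fin (D (k + 1))) (Fin (D k)) ℂ)
    (σ : Fin (d * d) → Matrix (Fin d) (Fin d) ℂ) (hσ0 : σ 0 = 1)
    (hσtr : ∀ α ≠ 0, (σ α).trace = 0) (hσspan : Submodule.span ℂ (Set.range σ) = ⊤) :
    mpoOp d D A N ∈ Matrix.unitaryGroup (Fin N → Fin d) ℂ ↔
      ((∑ p, ∑ q, rhoChain d D A N p q) = 1 ∧ Sspan d D A σ N = ⊥) := by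
  let : Unique (Fin (D 0)) := hD0 ▸ inferInstance
  let : Unique (Fin (D N)) := hDN ▸ inferInstance
  rw [mem_unitaryGroup_iff', ← transpose_eq_one,
    eq_one_iff_trace_mul_piKronecker hσ0 hσtr hσspan, sum_rhoChain_eq_one_iff hσ0,
    Sspan_eq_bot_iff]
  simp only [Schain_eq_zero_iff, Fin.val_ne_zero_iff]

/-- A tensor sequence generates a matrix-product unitary iff
`ρ^{(N)} = 1` (as a scalar, `D N = 1`) and `𝒮^{(N)} = {0}`. -/
theorem stmt_1 (N d : ℕ) (hN : 1 ≤ N) (hd : 2 ≤ d) (D : ℕ → ℕ)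
    (hD0 : D 0 = 1) (hDN : D N = 1) (hDpos : ∀ k, k ≤ N → 1 ≤ D k)
    (A : ∀ k : ℕ, Fin d → Fin d → Matrix (Fin (D (k + 1))) (Fin (D k)) ℂ)
    (σ : Fin (d * d) → Matrix (Fin d) (Fin d) ℂ)
    (hσ0 : ∀ α : Fin (d * d), (α : ℕ) = 0 → σ α = 1)
    (hσherm : ∀ α : Fin (d * d), (α : ℕ) ≠ 0 → (σ α).IsHermitian)
    (hσtr : ∀ α : Fin (d * d), (α : ℕ) ≠ 0 → (σ α).trace = 0)
    (hσorth : ∀ α β : Fin (d * d), (α : ℕ) ≠ 0 → (β : ℕ) ≠ 0 →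
      (σ α * σ β).trace = if α = β then 1 else 0)
    (hσbasis : Submodule.span ℂ (Set.range σ) = ⊤) :
    mpoOp d D A N ∈ Matrix.unitaryGroup (Fin N → Fin d) ℂ ↔
      ((∑ p, ∑ q, rhoChain d D A N p q) = 1 ∧ Sspan d D A σ N = ⊥) := by
  have : NeZero d := ⟨by omega⟩
  exact stmt_1_general N d D hD0 hDN A σ (hσ0 0 rfl)
    (fun α hα => hσtr α (Fin.val_ne_zero_iff.2 hα)) hσbasis

end
end

section
/- If a tensor sequence A_1, …, A_N generates a matrix-product unitary and is in canonical form, then for every k = 1, …, N and all physical indices j, j' ∈ {1,…,d}: ⟨Ω_{D_k}| (Σ_i conj(A_k^{ij'}) ⊗ A_k^{ij}) |ρ^{(k−1)}⟩ = δ_{jj'}, and ⟨Ω_{D_k}| (Σ_i conj(A_k^{ij'}) ⊗ A_k^{ij}) |X⟩ = 0 for every X ∈ 𝒮^{(k−1)}, where |Ω_D⟩ := Σ_{m=1}^{D} |m⟩ ⊗ |m⟩ ∈ ℂ^D ⊗ ℂ^D, and where for k = 1 one reads ρ^{(0)} = 1 and 𝒮^{(0)} = {0}. -/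
open Matrix Kronecker

noncomputable section

/-!
The covector `⟨Ω| (conj(B) ⊗ C)` has the entries of `Bᴴ C`, so the canonical form says exactly that
`⟨Ω| E = ⟨Ω|` at every site. Hence a product `S(M_k) ⋯ S(M_1)` has the same `⟨Ω|`-value as its
extension by the transfer matrices of all later sites, that is, by physical matrices `𝟙 / d`, which
have trace one. For the full chain this value is `Tr (U† U (M_N ⊗ ⋯ ⊗ M_1)) = ∏ₜ Tr M_t`.
Taking the matrix unit `|j'⟩⟨j|` at site `ℓ + 1` yields both claims, the second because a chain
with some `α_t ≠ 0` contains a traceless factor.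
-/

section DoubleLayer

variable {ι κ m n R : Type*} [Fintype ι] [CommSemiring R] [StarRing R]

/-- The double-layer tensor `Σ_i conj(A^{ij'}) ⊗ A^{ij}`, in which the physical output indices of
two copies of `A` are contracted and the input indices are left open. -/
def doubleLayer (A : ι → κ → Matrix m n R) (j' j : κ) : Matrix (m × m) (n × n) R :=
  ∑ i, (A i j').map (starRingEnd R) ⊗ₖ A i j

lemma doubleLayer_apply (A : ι → κ → Matrix m n R) (j' j : κ) (p : m × m) (q : n × n) :
    doubleLayer A j' j p q = ∑ i, starRingEnd R (A i j' p.1 q.1) * A i j p.2 q.2 := by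
  simp only [doubleLayer, Matrix.sum_apply, kroneckerMap_apply, map_apply]

lemma sum_doubleLayer_diag [Fintype m] (A : ι → κ → Matrix m n R) (j' j : κ) (q : n × n) :
    ∑ a, doubleLayer A j' j (a, a) q = (∑ i, (A i j')ᴴ * A i j) q.1 q.2 := by
  simp only [doubleLayer_apply, Matrix.sum_apply, mul_apply, conjTranspose_apply,
    starRingEnd_apply]
  exact Finset.sum_comm

end DoubleLayer

section OmegaPairing

variable {m n l R : Type*} [Fintype m] [Fintype n] [CommSemiring R]

/-- The pairing `X ↦ ⟨Ω|X|𝟏⟩`, where `|𝟏⟩` is the all-ones vector. When `n` has a single element,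
the matrix `X` is a vector in the doubled bond space and this is `⟨Ω|X⟩`. -/
def omegaPairing : Matrix (m × m) n R →ₗ[R] R :=
  ∑ a : m, ∑ q : n, entryLinearMap R R (a, a) q

lemma omegaPairing_apply (X : Matrix (m × m) n R) : omegaPairing X = ∑ a, ∑ q, X (a, a) q := by
  simp only [omegaPairing, LinearMap.sum_apply, entryLinearMap_apply]

lemma omegaPairing_mul [Fintype l] (S : Matrix (m × m) l R) (X : Matrix l n R) :
    omegaPairing (S * X) = ∑ a, ∑ p, S (a, a) p * ∑ q, X p q := by
  simp only [omegaPairing_apply, mul_apply, Finset.mul_sum]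
  exact Finset.sum_congr rfl fun _ _ => Finset.sum_comm

lemma omegaPairing_mul_of_sum_diag [Fintype l] [DecidableEq l] {S : Matrix (m × m) (l × l) R}
    (hS : ∀ p, ∑ a, S (a, a) p = (1 : Matrix l l R) p.1 p.2) (X : Matrix (l × l) n R) :
    omegaPairing (S * X) = omegaPairing X := by
  rw [omegaPairing_mul, Finset.sum_comm]
  simp only [← Finset.sum_mul, hS, Fintype.sum_prod_type, one_apply, ite_mul, one_mul, zero_mul,
    Finset.sum_ite_eq, Finset.mem_univ, if_true, omegaPairing_apply]

end OmegaPairing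

section SiteTransfer

variable {d Dl Dr : ℕ} (A : Fin d → Fin d → Matrix (Fin Dl) (Fin Dr) ℂ)

lemma Smat_eq_sum_doubleLayer (M : Matrix (Fin d) (Fin d) ℂ) :
    Smat A M = ∑ x : Fin d × Fin d, M x.1 x.2 • doubleLayer A x.1 x.2 := by
  simp only [Smat, doubleLayer, Finset.smul_sum]
  rw [Finset.sum_comm, Fintype.sum_prod_type_right]
  exact Finset.sum_congr rfl fun _ _ => Finset.sum_comm

lemma Smat_smul (c : ℂ) (M : Matrix (Fin d) (Fin d) ℂ) : Smat A (c • M) = c • Smat A M := by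
  simp only [Smat, Finset.smul_sum, smul_smul, Matrix.smul_apply, smul_eq_mul]

lemma Smat_single (j' j : Fin d) : Smat A (single j' j 1) = doubleLayer A j' j := by
  rw [Smat_eq_sum_doubleLayer, Fintype.sum_eq_single (j', j)]
  · simp only [single_apply_same, one_smul]
  · rintro ⟨b', b⟩ hne
    have : ¬(j' = b' ∧ j = b) := by rintro ⟨rfl, rfl⟩; exact hne rfl
    simp only [single_apply, if_neg this, zero_smul]

lemma Smat_one : Smat A 1 = ∑ j, doubleLayer A j j := by
  simp [Smat_eq_sum_doubleLayer, Fintype.sum_prod_type, one_apply, ite_smul]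

end SiteTransfer

lemma sum_prod_apply_mul_one_eq_prod_trace {ι κ R : Type*} [Fintype ι] [DecidableEq ι] [Fintype κ]
    [DecidableEq κ] [CommSemiring R] (M : ι → Matrix κ κ R) :
    ∑ x : ι → κ × κ, (∏ t, M t (x t).1 (x t).2) *
      (1 : Matrix (ι → κ) (ι → κ) R) (fun t => (x t).1) (fun t => (x t).2) =
      ∏ t, (M t).trace := by
  have hsite : ∀ B : Matrix κ κ R,
      B.trace = ∑ y : κ × κ, if y.1 = y.2 then B y.1 y.2 else 0 := by
    simp [trace, Fintype.sum_prod_type]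
  simp only [hsite, Finset.prod_univ_sum, Fintype.piFinset_univ, Fintype.prod_ite_zero, one_apply,
    funext_iff, mul_ite, mul_one, mul_zero]

section TransferChain

variable {d : ℕ} {D : ℕ → ℕ}
  (A : ∀ k : ℕ, Fin d → Fin d → Matrix (Fin (D (k + 1))) (Fin (D k)) ℂ)

/-- The product `S(M_k) ⋯ S(M_1)` for arbitrary physical matrices `M_t`, where
`S(M) = Σ_{i,j,j'} M_{j'j} • conj(A^{ij'}) ⊗ A^{ij}`. It contains `Schain` and `rhoChain` as the
cases of scaled basis matrices and of `M_t = 𝟙 / d`. -/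
def transferChain : ∀ k : ℕ, (Fin k → Matrix (Fin d) (Fin d) ℂ) →
    Matrix (Fin (D k) × Fin (D k)) (Fin (D 0) × Fin (D 0)) ℂ
  | 0, _ => 1
  | k + 1, M => Smat (A k) (M (Fin.last k)) * transferChain k (Fin.init M)

lemma transferChain_snoc {k : ℕ} (M : Fin k → Matrix (Fin d) (Fin d) ℂ)
    (B : Matrix (Fin d) (Fin d) ℂ) :
    transferChain A (k + 1) (Fin.snoc (α := fun _ => Matrix (Fin d) (Fin d) ℂ) M B) =
      Smat (A k) B * transferChain A k M := by
  rw [transferChain, Fin.snoc_last, Fin.init_snoc]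

lemma rhoChain_eq_transferChain (k : ℕ) :
    rhoChain d D A k = transferChain A k fun _ => (d : ℂ)⁻¹ • 1 := by
  induction k with
  | zero => rfl
  | succ k ih => rw [rhoChain, transferChain, ih, Esite, Smat_smul]; rfl

lemma Schain_eq_transferChain (σ : Fin (d * d) → Matrix (Fin d) (Fin d) ℂ) {k : ℕ}
    (α : Fin k → Fin (d * d)) :
    Schain d D A σ k α =
      transferChain A k fun t => (if (α t : ℕ) = 0 then (d : ℂ)⁻¹ else 1) • σ (α t) := by
  induction k with
  | zero => rfl
  | succ k ih => rw [Schain, transferChain, ih, Ssite, Smat_smul]; rfl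

lemma doubleLayer_mpoProd_succ {k : ℕ} (J' J : Fin (k + 1) → Fin d) :
    doubleLayer (mpoProd d D A (k + 1)) J' J =
      doubleLayer (A k) (J' (Fin.last k)) (J (Fin.last k)) *
        doubleLayer (mpoProd d D A k) (Fin.init J') (Fin.init J) := by
  simp only [doubleLayer]
  rw [← (Fin.snocEquiv fun _ => Fin d).sum_comp, Fintype.sum_prod_type, Matrix.sum_mul]
  simp only [Matrix.mul_sum, mpoProd, Fin.snocEquiv_apply, Fin.snoc_last, Fin.snoc_castSucc,
    Matrix.map_mul, mul_kronecker_mul]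
  rfl

lemma transferChain_eq_sum_doubleLayer {k : ℕ} (M : Fin k → Matrix (Fin d) (Fin d) ℂ) :
    transferChain A k M = ∑ x : Fin k → Fin d × Fin d, (∏ t, M t (x t).1 (x t).2) •
      doubleLayer (mpoProd d D A k) (fun t => (x t).1) (fun t => (x t).2) := by
  induction k with
  | zero => simp [transferChain, doubleLayer, mpoProd]
  | succ k ih =>
    rw [transferChain, ih, ← (Fin.snocEquiv fun _ => Fin d × Fin d).sum_comp,
      Fintype.sum_prod_type, Smat_eq_sum_doubleLayer, Matrix.sum_mul]
    simp only [Matrix.mul_sum]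
    refine Finset.sum_congr rfl fun y _ => Finset.sum_congr rfl fun x _ => ?_
    simp only [doubleLayer_mpoProd_succ, Fin.prod_univ_castSucc, Fin.snocEquiv_apply,
      Fin.snoc_last, Fin.snoc_castSucc, Matrix.smul_mul, Matrix.mul_smul, smul_smul, Fin.init_def]

lemma omegaPairing_doubleLayer_mpoProd {N : ℕ} (hDN : D N = 1) (J' J : Fin N → Fin d) :
    omegaPairing (doubleLayer (mpoProd d D A N) J' J) =
      ((mpoOp d D A N)ᴴ * mpoOp d D A N) J' J := by
  have : Unique (Fin (D N)) := hDN ▸ (inferInstance : Unique (Fin 1))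
  simp only [omegaPairing_apply, doubleLayer_apply, mul_apply, conjTranspose_apply, mpoOp,
    of_apply, Fintype.sum_unique, star_sum, Finset.sum_mul_sum, starRingEnd_apply]
  rw [Finset.sum_comm]
  exact Finset.sum_congr rfl fun _ _ => Fintype.sum_prod_type _

lemma omegaPairing_transferChain_full {N : ℕ} (hDN : D N = 1)
    (hU : mpoOp d D A N ∈ unitaryGroup (Fin N → Fin d) ℂ)
    (M : Fin N → Matrix (Fin d) (Fin d) ℂ) :
    omegaPairing (transferChain A N M) = ∏ t, (M t).trace := by
  have hisometry : (mpoOp d D A N)ᴴ * mpoOp d D A N = 1 := mem_unitaryGroup_iff'.1 hU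
  simp only [transferChain_eq_sum_doubleLayer, map_sum, map_smul, smul_eq_mul,
    omegaPairing_doubleLayer_mpoProd A hDN, hisometry, sum_prod_apply_mul_one_eq_prod_trace]

lemma omegaPairing_Esite_mul {n : Type*} [Fintype n] {k : ℕ}
    (hcan : (d : ℂ)⁻¹ • ∑ i, ∑ j, (A k i j)ᴴ * A k i j = 1)
    (X : Matrix (Fin (D k) × Fin (D k)) n ℂ) :
    omegaPairing (Esite d D A k * X) = omegaPairing X := by
  refine omegaPairing_mul_of_sum_diag (fun p => ?_) X
  rw [← hcan, Finset.sum_comm]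
  simp only [Esite, Smat_one, Matrix.smul_apply, Matrix.sum_apply, ← Finset.smul_sum]
  rw [Finset.sum_comm]
  simp only [sum_doubleLayer_diag, Matrix.sum_apply]

theorem omegaPairing_transferChain_of_le [NeZero d] {N : ℕ} (hDN : D N = 1)
    (hU : mpoOp d D A N ∈ unitaryGroup (Fin N → Fin d) ℂ) {k : ℕ} (hk : k ≤ N)
    (hcan : ∀ l, k ≤ l → l < N → (d : ℂ)⁻¹ • ∑ i, ∑ j, (A l i j)ᴴ * A l i j = 1)
    (M : Fin k → Matrix (Fin d) (Fin d) ℂ) :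
    omegaPairing (transferChain A k M) = ∏ t, (M t).trace := by
  induction hk using Nat.decreasingInduction with
  | self => exact omegaPairing_transferChain_full A hDN hU M
  | of_succ k hk ih =>
    have htrace : ((d : ℂ)⁻¹ • (1 : Matrix (Fin d) (Fin d) ℂ)).trace = 1 := by
      simp [NeZero.ne d]
    calc omegaPairing (transferChain A k M)
        = omegaPairing (Esite d D A k * transferChain A k M) :=
          (omegaPairing_Esite_mul A (hcan k le_rfl hk) _).symm
      _ = omegaPairing (transferChain A (k + 1)
            (Fin.snoc (α := fun _ => Matrix (Fin d) (Fin d) ℂ) M ((d : ℂ)⁻¹ • 1))) := by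
          rw [transferChain_snoc, Smat_smul, Esite]
      _ = ∏ t, (M t).trace := by
          rw [ih fun l hl => hcan l (Nat.le_of_succ_le hl), Fin.prod_univ_castSucc]
          simp only [Fin.snoc_last, Fin.snoc_castSucc, htrace, mul_one]

theorem omegaPairing_doubleLayer_mul_transferChain {N : ℕ} (hDN : D N = 1)
    (hU : mpoOp d D A N ∈ unitaryGroup (Fin N → Fin d) ℂ) {ℓ : ℕ} (hℓ : ℓ < N)
    (hcan : ∀ k, ℓ < k → k < N → (d : ℂ)⁻¹ • ∑ i, ∑ j, (A k i j)ᴴ * A k i j = 1)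
    (j j' : Fin d) (M : Fin ℓ → Matrix (Fin d) (Fin d) ℂ) :
    omegaPairing (doubleLayer (A ℓ) j' j * transferChain A ℓ M) =
      (∏ t, (M t).trace) * if j = j' then 1 else 0 := by
  have : NeZero d := ⟨j.pos.ne'⟩
  have htrace : (single j' j (1 : ℂ)).trace = if j = j' then 1 else 0 := by
    split_ifs with h
    · rw [h, trace_single_eq_same]
    · exact trace_single_eq_of_ne _ _ _ (Ne.symm h)
  rw [← Smat_single, ← transferChain_snoc, omegaPairing_transferChain_of_le A hDN hU hℓ hcan,
    Fin.prod_univ_castSucc]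
  simp only [Fin.snoc_last, Fin.snoc_castSucc, htrace]

lemma omegaPairing_doubleLayer_mul_rhoChain {N : ℕ} (hDN : D N = 1)
    (hU : mpoOp d D A N ∈ unitaryGroup (Fin N → Fin d) ℂ) {ℓ : ℕ} (hℓ : ℓ < N)
    (hcan : ∀ k, ℓ < k → k < N → (d : ℂ)⁻¹ • ∑ i, ∑ j, (A k i j)ᴴ * A k i j = 1)
    (j j' : Fin d) :
    omegaPairing (doubleLayer (A ℓ) j' j * rhoChain d D A ℓ) = if j = j' then 1 else 0 := by
  have : (d : ℂ) ≠ 0 := Nat.cast_ne_zero.2 j.pos.ne'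
  rw [rhoChain_eq_transferChain, omegaPairing_doubleLayer_mul_transferChain A hDN hU hℓ hcan]
  simp [this]

lemma omegaPairing_doubleLayer_mul_of_mem_Sspan {N : ℕ} (hDN : D N = 1)
    (hU : mpoOp d D A N ∈ unitaryGroup (Fin N → Fin d) ℂ) {ℓ : ℕ} (hℓ : ℓ < N)
    (hcan : ∀ k, ℓ < k → k < N → (d : ℂ)⁻¹ • ∑ i, ∑ j, (A k i j)ᴴ * A k i j = 1)
    {σ : Fin (d * d) → Matrix (Fin d) (Fin d) ℂ}
    (hσtr : ∀ α : Fin (d * d), (α : ℕ) ≠ 0 → (σ α).trace = 0) (j j' : Fin d)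
    {X : Matrix (Fin (D ℓ) × Fin (D ℓ)) (Fin (D 0) × Fin (D 0)) ℂ} (hX : X ∈ Sspan d D A σ ℓ) :
    omegaPairing (doubleLayer (A ℓ) j' j * X) = 0 := by
  induction hX using Submodule.span_induction with
  | mem X hX =>
    obtain ⟨α, ⟨t, ht⟩, rfl⟩ := hX
    have htraceless : ((if (α t : ℕ) = 0 then (d : ℂ)⁻¹ else 1) • σ (α t)).trace = 0 := by
      rw [trace_smul, hσtr _ ht, smul_zero]
    rw [Schain_eq_transferChain, omegaPairing_doubleLayer_mul_transferChain A hDN hU hℓ hcan,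
      Finset.prod_eq_zero (Finset.mem_univ t) htraceless, zero_mul]
  | zero => rw [Matrix.mul_zero, map_zero]
  | add X Y _ _ hX hY => rw [Matrix.mul_add, map_add, hX, hY, add_zero]
  | smul c X _ hX => rw [Matrix.mul_smul, ← Complex.coe_smul, map_smul, hX, smul_zero]

end TransferChain

theorem stmt_2_general {N d : ℕ} {D : ℕ → ℕ} (hDN : D N = 1)
    (A : ∀ k : ℕ, Fin d → Fin d → Matrix (Fin (D (k + 1))) (Fin (D k)) ℂ)
    (σ : Fin (d * d) → Matrix (Fin d) (Fin d) ℂ)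
    (hσtr : ∀ α : Fin (d * d), (α : ℕ) ≠ 0 → (σ α).trace = 0)
    (hU : mpoOp d D A N ∈ Matrix.unitaryGroup (Fin N → Fin d) ℂ) {ℓ : ℕ} (hℓ : ℓ < N)
    (hcan : ∀ k, ℓ < k → k < N → (d : ℂ)⁻¹ • ∑ i, ∑ j, (A k i j)ᴴ * A k i j = 1)
    (j j' : Fin d) :
    (∑ m : Fin (D (ℓ + 1)), ∑ p : Fin (D ℓ) × Fin (D ℓ),
        (∑ i, (A ℓ i j').map (starRingEnd ℂ) ⊗ₖ A ℓ i j) (m, m) p *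
          ∑ q, rhoChain d D A ℓ p q) = (if j = j' then 1 else 0) ∧
      ∀ X ∈ Sspan d D A σ ℓ,
        ∑ m : Fin (D (ℓ + 1)), ∑ p : Fin (D ℓ) × Fin (D ℓ),
          (∑ i, (A ℓ i j').map (starRingEnd ℂ) ⊗ₖ A ℓ i j) (m, m) p * ∑ q, X p q = 0 := by
  simp only [← omegaPairing_mul]
  exact ⟨omegaPairing_doubleLayer_mul_rhoChain A hDN hU hℓ hcan j j',
    fun _ hX => omegaPairing_doubleLayer_mul_of_mem_Sspan A hDN hU hℓ hcan hσtr j j' hX⟩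

/-- If a tensor sequence generates a matrix-product unitary and is in
canonical form, then for every site `k` (0-based: `ℓ < N`, tensor `A ℓ`) and all physical
indices `j, j'`: `⟨Ω| (Σ_i conj(A^{ij'}) ⊗ A^{ij}) |ρ^{(ℓ)}⟩ = δ_{jj'}` and
`⟨Ω| (Σ_i conj(A^{ij'}) ⊗ A^{ij}) |X⟩ = 0` for every `X ∈ 𝒮^{(ℓ)}`, where
`|Ω_D⟩ = Σ_m |m⟩ ⊗ |m⟩`. -/
theorem stmt_2 (N d : ℕ) (hN : 1 ≤ N) (hd : 2 ≤ d) (D : ℕ → ℕ)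
    (hD0 : D 0 = 1) (hDN : D N = 1) (hDpos : ∀ k, k ≤ N → 1 ≤ D k)
    (A : ∀ k : ℕ, Fin d → Fin d → Matrix (Fin (D (k + 1))) (Fin (D k)) ℂ)
    (σ : Fin (d * d) → Matrix (Fin d) (Fin d) ℂ)
    (hσ0 : ∀ α : Fin (d * d), (α : ℕ) = 0 → σ α = 1)
    (hσherm : ∀ α : Fin (d * d), (α : ℕ) ≠ 0 → (σ α).IsHermitian)
    (hσtr : ∀ α : Fin (d * d), (α : ℕ) ≠ 0 → (σ α).trace = 0)
    (hσorth : ∀ α β : Fin (d * d), (α : ℕ) ≠ 0 → (β : ℕ) ≠ 0 →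
      (σ α * σ β).trace = if α = β then 1 else 0)
    (hσbasis : Submodule.span ℂ (Set.range σ) = ⊤)
    (hU : mpoOp d D A N ∈ Matrix.unitaryGroup (Fin N → Fin d) ℂ)
    (hcan : ∀ k, k < N →
      ((d : ℂ))⁻¹ • ∑ i, ∑ j, (A k i j)ᴴ * (A k i j) = 1) :
    ∀ ℓ, ℓ < N → ∀ j j' : Fin d,
      ((∑ m : Fin (D (ℓ + 1)), ∑ p : Fin (D ℓ) × Fin (D ℓ),
          (∑ i, ((A ℓ i j').map (starRingEnd ℂ)) ⊗ₖ (A ℓ i j)) (m, m) p *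
            (∑ q, rhoChain d D A ℓ p q)) = if j = j' then 1 else 0) ∧
      (∀ X ∈ Sspan d D A σ ℓ,
        (∑ m : Fin (D (ℓ + 1)), ∑ p : Fin (D ℓ) × Fin (D ℓ),
          (∑ i, ((A ℓ i j').map (starRingEnd ℂ)) ⊗ₖ (A ℓ i j)) (m, m) p *
            (∑ q, X p q)) = 0) := by
  intro ℓ hℓ j j'
  exact stmt_2_general hDN A σ hσtr hU hℓ (fun k _ => hcan k) j j'

end
end

section
/- Let A_1, …, A_N be a tensor sequence that generates a matrix-product unitary and is in canonical form. For each k = 1, …, N define the linear map V_k : (ℂ^d)^{⊗k} → ℂ^{D_k} ⊗ (ℂ^d)^{⊗k} by ⟨m; i_k … i_1 | V_k | j_k … j_1⟩ = (A_k^{i_k j_k} ⋯ A_1^{i_1 j_1})_{m,1} (the m-th entry of the D_k × 1 matrix product). Then V_k† V_k = 𝟙_{d^k} for every k, i.e., every MPU in canonical form is a sequence of isometries V_1, …, V_N with U = V_N. -/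
open Matrix Kronecker

noncomputable section

/-- The partial contraction `V_k`, a map from `(ℂ^d)^{⊗k}` to `ℂ^{D_k} ⊗ (ℂ^d)^{⊗k}`. -/
def Viso (d : ℕ) (D : ℕ → ℕ)
    (A : ∀ k : ℕ, Fin d → Fin d → Matrix (Fin (D (k + 1))) (Fin (D k)) ℂ) (k : ℕ) :
    Matrix (Fin (D k) × (Fin k → Fin d)) (Fin k → Fin d) ℂ :=
  Matrix.of fun mi j => ∑ n, mpoProd d D A k mi.2 j mi.1 n

/-! Contracting the last physical input index of `V_{k+1}† V_{k+1}` places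
`∑ (A_{k+1}^{ij})† A_{k+1}^{ij}` between the two copies of `V_k` in `V_k† V_k`, so by the canonical
form it gives `d V_k† V_k`. If `V_{k+1}` is an isometry, the same contraction gives `d 𝟙`. Hence
the isometry property descends from `V_N`, which is `U` because `D_N = 1`. -/

section PartialTrace

variable {q κ R : Type*} [Fintype κ]

/-- The partial trace of a matrix over the first tensor factor of its index set. -/
def partialTraceLeft [AddCommMonoid R] (M : Matrix (κ × q) (κ × q) R) : Matrix q q R :=
  ∑ b, M.submatrix (Prod.mk b) (Prod.mk b)

lemma partialTraceLeft_one [DecidableEq q] [DecidableEq κ] [Semiring R] :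
    partialTraceLeft (1 : Matrix (κ × q) (κ × q) R) = (Fintype.card κ : R) • 1 := by
  simp only [partialTraceLeft, submatrix_one _ (Prod.mk_right_injective _), Finset.sum_const,
    Finset.card_univ, Nat.cast_smul_eq_nsmul]

end PartialTrace

section AttachSite

variable {m n p q ι κ R : Type*}

/-- The slice of a matrix with values in a tensor product `n ⊗ p` at a basis vector of `p`. -/
def outputSlice (V : Matrix (n × p) q R) (i : p) : Matrix n q R :=
  V.submatrix (·, i) id

/-- One step in the contraction of a matrix-product operator: the bond index `n` of `V` is
contracted with the site tensor `A`, whose new bond index `m`, output index `ι` and input index `κ`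
are left open. -/
def attachSite [Fintype n] [NonUnitalNonAssocSemiring R] (A : ι → κ → Matrix m n R)
    (V : Matrix (n × p) q R) : Matrix (m × (ι × p)) (κ × q) R :=
  of fun (x, a, i) (b, y) => (A a b * outputSlice V i) x y

lemma conjTranspose_mul_self_eq_sum_outputSlice [Fintype n] [Fintype p]
    [NonUnitalNonAssocSemiring R] [Star R] (V : Matrix (n × p) q R) :
    Vᴴ * V = ∑ i, (outputSlice V i)ᴴ * outputSlice V i := by
  ext x y
  simp only [mul_apply, Matrix.sum_apply, Fintype.sum_prod_type_right, conjTranspose_apply,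
    outputSlice, submatrix_apply, id_eq]

lemma outputSlice_attachSite_submatrix [Fintype n] [NonUnitalNonAssocSemiring R]
    (A : ι → κ → Matrix m n R) (V : Matrix (n × p) q R) (a : ι) (b : κ) (i : p) :
    (outputSlice (attachSite A V) (a, i)).submatrix id (Prod.mk b) = A a b * outputSlice V i :=
  rfl

variable [Fintype m] [Fintype n] [Fintype p] [Fintype ι] [Fintype κ]

lemma partialTraceLeft_conjTranspose_mul_self_attachSite [NonUnitalSemiring R] [StarRing R]
    (A : ι → κ → Matrix m n R) (V : Matrix (n × p) q R) :
    partialTraceLeft ((attachSite A V)ᴴ * attachSite A V) =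
      ∑ i, (outputSlice V i)ᴴ * (∑ a, ∑ b, (A a b)ᴴ * A a b) * outputSlice V i := by
  have block_gram (b : κ) :
      ((attachSite A V)ᴴ * attachSite A V).submatrix (Prod.mk b) (Prod.mk b) =
        ∑ i, ∑ a, (A a b * outputSlice V i)ᴴ * (A a b * outputSlice V i) := by
    rw [conjTranspose_mul_self_eq_sum_outputSlice, Fintype.sum_prod_type_right]
    simp only [← outputSlice_attachSite_submatrix, conjTranspose_submatrix,
      ← submatrix_mul _ _ _ id _ Function.bijective_id]
    ext x y
    simp only [Matrix.sum_apply, submatrix_apply]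
  simp only [partialTraceLeft, block_gram, Matrix.mul_sum, Matrix.sum_mul, conjTranspose_mul,
    Matrix.mul_assoc]
  rw [Finset.sum_comm]
  exact Finset.sum_congr rfl fun _ _ => Finset.sum_comm

lemma conjTranspose_mul_self_eq_one_of_attachSite [DecidableEq n] [DecidableEq q] [DecidableEq κ]
    [Field R] [StarRing R] {A : ι → κ → Matrix m n R} {V : Matrix (n × p) q R}
    (hκ : (Fintype.card κ : R) ≠ 0)
    (hA : (Fintype.card κ : R)⁻¹ • ∑ a, ∑ b, (A a b)ᴴ * A a b = 1)
    (hV : (attachSite A V)ᴴ * attachSite A V = 1) : Vᴴ * V = 1 := by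
  rw [inv_smul_eq_iff₀ hκ] at hA
  refine (IsUnit.mk0 _ hκ).smul_left_cancel.mp ?_
  calc (Fintype.card κ : R) • (Vᴴ * V)
      = ∑ i, (outputSlice V i)ᴴ * (∑ a, ∑ b, (A a b)ᴴ * A a b) * outputSlice V i := by
        simp only [hA, Matrix.mul_smul, Matrix.smul_mul, Matrix.mul_one, ← Finset.smul_sum,
          conjTranspose_mul_self_eq_sum_outputSlice]
    _ = partialTraceLeft ((attachSite A V)ᴴ * attachSite A V) :=
        (partialTraceLeft_conjTranspose_mul_self_attachSite A V).symm
    _ = (Fintype.card κ : R) • 1 := by rw [hV, partialTraceLeft_one]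

end AttachSite

section PartialContraction

variable {d : ℕ} {D : ℕ → ℕ}
  {A : ∀ k : ℕ, Fin d → Fin d → Matrix (Fin (D (k + 1))) (Fin (D k)) ℂ}

lemma Viso_succ_submatrix_snocEquiv (k : ℕ) :
    (Viso d D A (k + 1)).submatrix ((Equiv.refl _).prodCongr (Fin.snocEquiv fun _ => Fin d))
      (Fin.snocEquiv fun _ => Fin d) = attachSite (A k) (Viso d D A k) := by
  ext ⟨x, a, i⟩ ⟨b, j⟩
  simp only [Viso, attachSite, outputSlice, mpoProd, mul_apply, submatrix_apply, of_apply,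
    Finset.mul_sum]
  rw [Finset.sum_comm]
  simp

lemma Viso_isometry_of_succ {k : ℕ} (hd : d ≠ 0)
    (hcan : (d : ℂ)⁻¹ • ∑ i, ∑ j, (A k i j)ᴴ * A k i j = 1)
    (hV : (Viso d D A (k + 1))ᴴ * Viso d D A (k + 1) = 1) :
    (Viso d D A k)ᴴ * Viso d D A k = 1 := by
  refine conjTranspose_mul_self_eq_one_of_attachSite (A := A k) ?_ ?_ ?_
  · simpa using hd
  · simpa using hcan
  · rw [← Viso_succ_submatrix_snocEquiv, conjTranspose_submatrix, submatrix_mul_equiv, hV,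
      submatrix_one_equiv]

lemma Viso_isometry_of_le {k N : ℕ} (hd : d ≠ 0) (hkN : k ≤ N)
    (hcan : ∀ l, k ≤ l → l < N → (d : ℂ)⁻¹ • ∑ i, ∑ j, (A l i j)ᴴ * A l i j = 1)
    (hV : (Viso d D A N)ᴴ * Viso d D A N = 1) :
    (Viso d D A k)ᴴ * Viso d D A k = 1 := by
  induction hkN using Nat.decreasingInduction with
  | self => exact hV
  | of_succ l hl ih =>
    exact Viso_isometry_of_succ hd (hcan l le_rfl hl) (ih fun l' hl' => hcan l' (by lia))

lemma mpoOp_apply_eq_sum_Viso (N : ℕ) (i j : Fin N → Fin d) :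
    mpoOp d D A N i j = ∑ m, Viso d D A N (m, i) j :=
  rfl

lemma Viso_isometry_of_mpoOp_mem_unitaryGroup {N : ℕ} (hDN : D N = 1)
    (hU : mpoOp d D A N ∈ unitaryGroup (Fin N → Fin d) ℂ) :
    (Viso d D A N)ᴴ * Viso d D A N = 1 := by
  have : Unique (Fin (D N)) := (finCongr hDN).unique
  have mpoOp_eq : mpoOp d D A N =
      (Viso d D A N).submatrix (Equiv.uniqueProd (Fin N → Fin d) (Fin (D N))).symm id := by
    ext i j
    exact Fintype.sum_unique fun x => Viso d D A N (x, i) j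
  rwa [mem_unitaryGroup_iff', star_eq_conjTranspose, mpoOp_eq, conjTranspose_submatrix,
    submatrix_mul_equiv, submatrix_id_id] at hU

end PartialContraction

/-- Every matrix-product unitary in canonical form is a sequence of
isometries: `V_k† V_k = 𝟙` for every `k = 1, …, N`, and `U = V_N`. -/
theorem stmt_4 (N d : ℕ) (hN : 1 ≤ N) (hd : 2 ≤ d) (D : ℕ → ℕ)
    (hD0 : D 0 = 1) (hDN : D N = 1) (hDpos : ∀ k, k ≤ N → 1 ≤ D k)
    (A : ∀ k : ℕ, Fin d → Fin d → Matrix (Fin (D (k + 1))) (Fin (D k)) ℂ)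
    (hU : mpoOp d D A N ∈ Matrix.unitaryGroup (Fin N → Fin d) ℂ)
    (hcan : ∀ k, k < N →
      ((d : ℂ))⁻¹ • ∑ i, ∑ j, (A k i j)ᴴ * (A k i j) = 1) :
    (∀ k, 1 ≤ k → k ≤ N → (Viso d D A k)ᴴ * Viso d D A k = 1) ∧
    (∀ i j : Fin N → Fin d, mpoOp d D A N i j = ∑ m, Viso d D A N (m, i) j) := by
  have hVN : (Viso d D A N)ᴴ * Viso d D A N = 1 :=
    Viso_isometry_of_mpoOp_mem_unitaryGroup hDN hU
  refine ⟨fun k _ hkN => ?_, mpoOp_apply_eq_sum_Viso N⟩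
  exact Viso_isometry_of_le (by lia) hkN (fun l _ => hcan l) hVN

end
end

section
/- For every N ≥ 2 there exist two-qubit unitaries W̃_1, …, W̃_N and X̃_2, …, X̃_N on ℂ² ⊗ ℂ² such that, for ALL two-qubit unitaries W_1, …, W_N and X_2, …, X_N, the spatially reflected two-floor staircase circuit R · C(W̃, X̃) · R is NOT equal to C(W, X). In other words, the class of two-floor staircase circuits of a fixed orientation is not closed under spatial reflection. -/
open Matrix

noncomputable section

/-- A two-qubit gate `G` acting on the adjacent qubits `k, k+1` (0-based: `k.castSucc`
and `k.succ`) of a chain of `N+1` qubits, tensored with the identity elsewhere. -/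
def embed2 (N : ℕ) (k : Fin N) (G : Matrix (Fin 2 × Fin 2) (Fin 2 × Fin 2) ℂ) :
    Matrix (Fin (N + 1) → Fin 2) (Fin (N + 1) → Fin 2) ℂ :=
  Matrix.of fun x y =>
    if ∀ m : Fin (N + 1), m ≠ k.castSucc → m ≠ k.succ → x m = y m then
      G (x k.castSucc, x k.succ) (y k.castSucc, y k.succ)
    else 0

/-- The ascending staircase `W_N^{(N,N+1)} ⋯ W_2^{(2,3)} W_1^{(1,2)}`
(`W t` is gate `W_{t+1}`, acting on qubits `t+1, t+2` in 1-based labeling). -/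
def ascStair (N : ℕ) (W : Fin N → Matrix (Fin 2 × Fin 2) (Fin 2 × Fin 2) ℂ) :
    Matrix (Fin (N + 1) → Fin 2) (Fin (N + 1) → Fin 2) ℂ :=
  ((List.finRange N).reverse.map (fun k => embed2 N k (W k))).prod

/-- The descending staircase `X_2^{(2,3)} X_3^{(3,4)} ⋯ X_N^{(N,N+1)}`
(`X t` for `t ≥ 1` is gate `X_{t+1}`; `X 0` is unused). -/
def descStair (N : ℕ) (X : Fin N → Matrix (Fin 2 × Fin 2) (Fin 2 × Fin 2) ℂ) :
    Matrix (Fin (N + 1) → Fin 2) (Fin (N + 1) → Fin 2) ℂ :=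
  (((List.finRange N).drop 1).map (fun k => embed2 N k (X k))).prod

/-- The two-floor staircase circuit `C(W, X)`: the descending staircase is applied
first, then the ascending one. -/
def twoFloor (N : ℕ) (W X : Fin N → Matrix (Fin 2 × Fin 2) (Fin 2 × Fin 2) ℂ) :
    Matrix (Fin (N + 1) → Fin 2) (Fin (N + 1) → Fin 2) ℂ :=
  ascStair N W * descStair N X

/-- The unitary reversing the order of the `N+1` qubits. -/
def revOp (N : ℕ) : Matrix (Fin (N + 1) → Fin 2) (Fin (N + 1) → Fin 2) ℂ :=
  Matrix.of fun x y => if ∀ m, x m = y m.rev then 1 else 0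

/-!
View an operator `V` on the chain as a `2 × 2` matrix of operators on all qubits but the first.
In a circuit `C(W, X)` only the gate `W₁` touches the first qubit, so the blocks are `P (g ⊗ 1) Q`,
with `P`, `Q` unitary and independent of the block and `g` a block of `W₁`. Hence
`⟨0|V|0⟩ ⟨1|V|1⟩† = P (h ⊗ 1) P†` for a `2 × 2` matrix `h`, and by Cayley–Hamilton this operator `M`
satisfies `M² = t M - d` for some scalars `t` and `d`. The reflected circuits have a second gate on
the first qubit, and a composition of CNOTs of that shape has `M = |0⟩⟨0| ⊗ X ⊗ 1`: the quadratic
relation would give `d = 0` and then `1 = t X`.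
-/

/-- Two-qubit operators. -/
abbrev Gate := Matrix (Fin 2 × Fin 2) (Fin 2 × Fin 2) ℂ

/-- Operators on a register of `N` qubits. -/
abbrev RegisterOp (N : ℕ) := Matrix (Fin N → Fin 2) (Fin N → Fin 2) ℂ

lemma algHom_mul_self_fin_two {R A : Type*} [CommRing R] [Ring A] [Algebra R A]
    (φ : Matrix (Fin 2) (Fin 2) R →ₐ[R] A) (h : Matrix (Fin 2) (Fin 2) R) :
    φ h * φ h = h.trace • φ h - h.det • 1 := by
  have cayley_hamilton : h * h = h.trace • h - h.det • 1 := by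
    nontriviality R
    have := aeval_self_charpoly h
    simp only [charpoly_fin_two, sq, map_add, map_sub, map_mul, Polynomial.aeval_X,
      Polynomial.aeval_C, Algebra.algebraMap_eq_smul_one] at this
    rwa [smul_one_mul, sub_add, sub_eq_zero] at this
  rw [← map_mul, cayley_hamilton, map_sub, map_smul, map_smul, map_one]

lemma permMatrix_mem_unitaryGroup {n R : Type*} [Fintype n] [DecidableEq n] [CommRing R]
    [StarRing R] (σ : Equiv.Perm n) : σ.permMatrix R ∈ unitaryGroup n R := by
  rw [mem_unitaryGroup_iff, star_eq_conjTranspose, conjTranspose_permMatrix, ← permMatrix_mul,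
    inv_mul_cancel, permMatrix_one]

/-- A two-qubit operator as a `2 × 2` matrix, indexed by the first qubit, of operators on the
second qubit. -/
def gateBlocks : Gate ≃ₐ[ℂ] Matrix (Fin 2) (Fin 2) (Matrix (Fin 2) (Fin 2) ℂ) :=
  (compAlgEquiv (Fin 2) (Fin 2) ℂ ℂ).symm

lemma gateBlocks_apply (G : Gate) (a b s t : Fin 2) :
    gateBlocks G a b s t = G (a, s) (b, t) :=
  rfl

/-- An operator on `N + 1` qubits as a `2 × 2` matrix, indexed by the first qubit, of operators
on the remaining qubits. -/
def splitFirst (N : ℕ) : RegisterOp (N + 1) ≃ₐ[ℂ] Matrix (Fin 2) (Fin 2) (RegisterOp N) :=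
  (reindexAlgEquiv ℂ ℂ (Fin.consEquiv fun _ => Fin 2).symm).trans
    (compAlgEquiv (Fin 2) (Fin N → Fin 2) ℂ ℂ).symm

lemma splitFirst_apply {N : ℕ} (V : RegisterOp (N + 1)) (a b : Fin 2) (x y : Fin N → Fin 2) :
    splitFirst N V a b x y = V (Fin.cons a x) (Fin.cons b y) :=
  rfl

/-- The one-qubit operator `h` acting on the first of `N + 1` qubits: as a block matrix it has
scalar blocks. -/
def onFirst (N : ℕ) : Matrix (Fin 2) (Fin 2) ℂ →ₐ[ℂ] RegisterOp (N + 1) :=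
  (splitFirst N).symm.toAlgHom.comp (Algebra.ofId ℂ (RegisterOp N)).mapMatrix

lemma splitFirst_onFirst {N : ℕ} (h : Matrix (Fin 2) (Fin 2) ℂ) :
    splitFirst N (onFirst N h) = h.map (algebraMap ℂ (RegisterOp N)) := by
  ext1 a b
  simp [onFirst, Algebra.ofId_apply]

lemma onFirst_apply_cons {N : ℕ} (h : Matrix (Fin 2) (Fin 2) ℂ) (c d : Fin 2)
    (x y : Fin N → Fin 2) :
    onFirst N h (Fin.cons c x) (Fin.cons d y) = if x = y then h c d else 0 := by
  calc onFirst N h (Fin.cons c x) (Fin.cons d y) = splitFirst N (onFirst N h) c d x y := rfl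
    _ = if x = y then h c d else 0 := by
      rw [splitFirst_onFirst, map_apply, algebraMap_matrix_apply, Algebra.algebraMap_self_apply]

lemma conjTranspose_onFirst {N : ℕ} (h : Matrix (Fin 2) (Fin 2) ℂ) :
    (onFirst N h)ᴴ = onFirst N hᴴ := by
  ext x y
  rw [← Fin.cons_self_tail x, ← Fin.cons_self_tail y]
  simp only [conjTranspose_apply, onFirst_apply_cons, eq_comm (a := Fin.tail x), apply_ite star,
    star_zero]

lemma conjTranspose_embed2 {N : ℕ} (k : Fin N) (G : Gate) :
    (embed2 N k G)ᴴ = embed2 N k Gᴴ := by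
  ext x y
  simp only [conjTranspose_apply, embed2, of_apply, eq_comm (a := x _), apply_ite star, star_zero]

lemma splitFirst_embed2_zero {N : ℕ} (G : Gate) :
    splitFirst (N + 1) (embed2 (N + 1) 0 G) = (onFirst N).mapMatrix (gateBlocks G) := by
  ext a b x y
  rw [← Fin.cons_self_tail x, ← Fin.cons_self_tail y, AlgHom.mapMatrix_apply, map_apply,
    onFirst_apply_cons, splitFirst_apply]
  simp [gateBlocks_apply, embed2, Fin.forall_fin_succ, funext_iff, Fin.tail, Fin.succ_succ_ne_one]

lemma splitFirst_embed2_succ {N : ℕ} (k : Fin N) (G : Gate) :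
    splitFirst (N + 1) (embed2 (N + 1) k.succ G) = scalar (Fin 2) (embed2 N k G) := by
  ext a b x y
  rw [splitFirst_apply, scalar_apply, diagonal_apply]
  by_cases hab : a = b <;>
    simp [embed2, Fin.forall_fin_succ, hab, (Fin.succ_ne_zero _).symm]

lemma embed2_mul {N : ℕ} (k : Fin N) (G H : Gate) :
    embed2 N k (G * H) = embed2 N k G * embed2 N k H := by
  induction N with
  | zero => exact k.elim0
  | succ N ih =>
    apply (splitFirst (N + 1)).injective
    cases k using Fin.cases with
    | zero => simp only [map_mul, splitFirst_embed2_zero]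
    | succ k => simp only [map_mul, splitFirst_embed2_succ, ih]

lemma embed2_one {N : ℕ} (k : Fin N) : embed2 N k 1 = 1 := by
  induction N with
  | zero => exact k.elim0
  | succ N ih =>
    apply (splitFirst (N + 1)).injective
    cases k using Fin.cases with
    | zero => simp only [map_one, splitFirst_embed2_zero]
    | succ k => simp only [map_one, splitFirst_embed2_succ, ih]

lemma embed2_mem_unitaryGroup {N : ℕ} (k : Fin N) {G : Gate}
    (hG : G ∈ unitaryGroup (Fin 2 × Fin 2) ℂ) :
    embed2 N k G ∈ unitaryGroup (Fin (N + 1) → Fin 2) ℂ := by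
  rw [mem_unitaryGroup_iff, star_eq_conjTranspose] at hG ⊢
  rw [conjTranspose_embed2, ← embed2_mul, hG, embed2_one]

lemma list_prod_embed2_mem_unitaryGroup {N : ℕ} (l : List (Fin N)) {G : Fin N → Gate}
    (hG : ∀ k, G k ∈ unitaryGroup (Fin 2 × Fin 2) ℂ) :
    (l.map fun k => embed2 N k (G k)).prod ∈ unitaryGroup (Fin (N + 1) → Fin 2) ℂ := by
  refine Submonoid.list_prod_mem _ fun M hM => ?_
  obtain ⟨k, -, rfl⟩ := List.mem_map.1 hM
  exact embed2_mem_unitaryGroup k (hG k)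

lemma splitFirst_twoFloor {N : ℕ} (W X : Fin (N + 1) → Gate) :
    splitFirst (N + 1) (twoFloor (N + 1) W X) =
      scalar (Fin 2) (ascStair N fun k => W k.succ) *
        splitFirst (N + 1) (embed2 (N + 1) 0 (W 0)) *
          scalar (Fin 2) ((List.finRange N).map fun k => embed2 N k (X k.succ)).prod := by
  simp [twoFloor, ascStair, descStair, List.finRange_succ, map_list_prod, Function.comp_def,
    splitFirst_embed2_succ]

/-- The operator `⟨0|V|0⟩ ⟨1|V|1⟩†` on the last `N` qubits, the bras and kets being on the first
one. In a two-floor circuit the gates `X_k` cancel from this product. -/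
def crossBlock {N : ℕ} (V : RegisterOp (N + 1)) : RegisterOp N :=
  splitFirst N V 0 0 * (splitFirst N V 1 1)ᴴ

lemma exists_crossBlock_twoFloor_eq {N : ℕ} (W : Fin (N + 1) → Gate) {X : Fin (N + 1) → Gate}
    (hX : ∀ k : Fin N, X k.succ ∈ unitaryGroup (Fin 2 × Fin 2) ℂ) :
    ∃ h, crossBlock (twoFloor (N + 1) W X) =
      ascStair N (fun k => W k.succ) * onFirst N h * (ascStair N fun k => W k.succ)ᴴ := by
  set P := ascStair N fun k => W k.succ
  let Q := ((List.finRange N).map fun k => embed2 N k (X k.succ)).prod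
  let g := gateBlocks (W 0)
  have hQ : Q * Qᴴ = 1 := mem_unitaryGroup_iff.1 (list_prod_embed2_mem_unitaryGroup _ hX)
  have block (a : Fin 2) :
      splitFirst (N + 1) (twoFloor (N + 1) W X) a a = P * onFirst N (g a a) * Q := by
    simp [splitFirst_twoFloor, splitFirst_embed2_zero, P, Q, g]
  refine ⟨g 0 0 * (g 1 1)ᴴ, ?_⟩
  calc crossBlock (twoFloor (N + 1) W X)
      = P * onFirst N (g 0 0) * (Q * Qᴴ) * onFirst N (g 1 1)ᴴ * Pᴴ := by
        simp only [crossBlock, block, conjTranspose_mul, conjTranspose_onFirst, mul_assoc]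
    _ = P * onFirst N (g 0 0 * (g 1 1)ᴴ) * Pᴴ := by
        rw [hQ, mul_one, map_mul, mul_assoc P]

lemma exists_crossBlock_twoFloor_mul_self {N : ℕ} {W X : Fin (N + 1) → Gate}
    (hW : ∀ k : Fin N, W k.succ ∈ unitaryGroup (Fin 2 × Fin 2) ℂ)
    (hX : ∀ k : Fin N, X k.succ ∈ unitaryGroup (Fin 2 × Fin 2) ℂ) :
    ∃ t d : ℂ, crossBlock (twoFloor (N + 1) W X) * crossBlock (twoFloor (N + 1) W X) =
      t • crossBlock (twoFloor (N + 1) W X) - d • 1 := by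
  obtain ⟨h, hh⟩ := exists_crossBlock_twoFloor_eq W hX
  let P : unitaryGroup (Fin (N + 1) → Fin 2) ℂ :=
    ⟨ascStair N fun k => W k.succ, list_prod_embed2_mem_unitaryGroup _ hW⟩
  let φ : Matrix (Fin 2) (Fin 2) ℂ →ₐ[ℂ] RegisterOp (N + 1) :=
    (Unitary.conjStarAlgAut ℂ _ P).toAlgEquiv.toAlgHom.comp (onFirst N)
  have hφ : crossBlock (twoFloor (N + 1) W X) = φ h := hh
  exact ⟨h.trace, h.det, by rw [hφ, algHom_mul_self_fin_two]⟩

/-- Reversal of the order of `N` qubits, on computational basis states. -/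
def reverseConfig (N : ℕ) : Equiv.Perm (Fin N → Fin 2) :=
  Fin.revPerm.arrowCongr (Equiv.refl (Fin 2))

lemma reverseConfig_apply {N : ℕ} (x : Fin N → Fin 2) (m : Fin N) :
    reverseConfig N x m = x m.rev :=
  rfl

lemma reverseConfig_symm (N : ℕ) : (reverseConfig N).symm = reverseConfig N := rfl

lemma revOp_eq_permMatrix (N : ℕ) : revOp N = (reverseConfig (N + 1)).permMatrix ℂ := by
  ext x y
  have : (∀ m, x m = y m.rev) ↔ reverseConfig (N + 1) x = y := by
    rw [funext_iff, Fin.rev_surjective.forall]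
    simp [reverseConfig_apply]
  simp [revOp, PEquiv.toMatrix_apply, this]

/-- Spatial reflection of operators: conjugation by the reversal of the qubits. -/
def reflect (N : ℕ) : RegisterOp N ≃ₐ[ℂ] RegisterOp N :=
  reindexAlgEquiv ℂ ℂ (reverseConfig N)

lemma revOp_mul_mul_revOp {N : ℕ} (M : RegisterOp (N + 1)) :
    revOp N * M * revOp N = reflect (N + 1) M := by
  rw [revOp_eq_permMatrix, PEquiv.toMatrix_toPEquiv_mul, PEquiv.mul_toMatrix_toPEquiv]
  rfl

/-- The gate `G` with its two qubits exchanged. -/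
def Gate.flip (G : Gate) : Gate := G.submatrix Prod.swap Prod.swap

lemma Gate.flip_mem_unitaryGroup {G : Gate} (hG : G ∈ unitaryGroup (Fin 2 × Fin 2) ℂ) :
    G.flip ∈ unitaryGroup (Fin 2 × Fin 2) ℂ := by
  rw [mem_unitaryGroup_iff, star_eq_conjTranspose] at hG ⊢
  calc G.flip * G.flipᴴ = (G * Gᴴ).submatrix Prod.swap Prod.swap :=
        submatrix_mul_equiv G Gᴴ _ (Equiv.prodComm (Fin 2) (Fin 2)) _
    _ = 1 := by rw [hG]; exact submatrix_one_equiv (Equiv.prodComm (Fin 2) (Fin 2))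

lemma reflect_embed2_flip {N : ℕ} (k : Fin N) (G : Gate) :
    reflect (N + 1) (embed2 N k G.flip) = embed2 N k.rev G := by
  ext x y
  have h : (∀ m, m ≠ k.castSucc → m ≠ k.succ → x m.rev = y m.rev) ↔
      ∀ m, m ≠ k.rev.castSucc → m ≠ k.rev.succ → x m = y m := by
    rw [Fin.rev_surjective.forall]
    simp only [ne_eq, ← Fin.rev_succ, ← Fin.rev_castSucc, Fin.rev_rev]
    grind
  simp [reflect, embed2, reverseConfig_symm, reverseConfig_apply, h, Gate.flip, Fin.rev_castSucc,
    Fin.rev_succ]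

lemma reflect_ascStair {N : ℕ} (W : Fin N → Gate) :
    reflect (N + 1) (ascStair N fun k => (W k.rev).flip) =
      ((List.finRange N).map fun k => embed2 N k (W k)).prod := by
  rw [ascStair, map_list_prod, List.finRange_reverse]
  simp [reflect_embed2_flip, Function.comp_def]

lemma reflect_descStair {N : ℕ} (X : Fin (N + 1) → Gate) :
    reflect (N + 2) (descStair (N + 1) fun k => (X k.rev).flip) =
      ((List.finRange N).reverse.map fun k =>
        embed2 (N + 1) k.castSucc (X k.castSucc)).prod := by
  rw [descStair, map_list_prod, List.finRange_reverse, List.finRange_succ]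
  simp [reflect_embed2_flip, Function.comp_def, Fin.rev_succ]

/-- The permutation `|s, t⟩ ↦ |s, s + t⟩` of the two-qubit basis states. -/
def cnotPerm : Equiv.Perm (Fin 2 × Fin 2) :=
  Equiv.prodShear (Equiv.refl (Fin 2)) Equiv.addLeft

/-- The controlled-NOT gate, with the first qubit as control. -/
def cnot : Gate := cnotPerm.permMatrix ℂ

/-- CNOT after SWAP: since `σ.permMatrix` sends the basis state `σ x` to `x`, the factors of the
permutation appear in the opposite order. -/
def cnotSwap : Gate := Equiv.Perm.permMatrix ℂ (cnotPerm.trans (Equiv.prodComm (Fin 2) (Fin 2)))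

/-- The Pauli matrix `X`, i.e. the NOT gate. -/
def pauliX : Matrix (Fin 2) (Fin 2) ℂ := !![0, 1; 1, 0]

lemma gateBlocks_cnot : gateBlocks cnot = !![1, 0; 0, pauliX] := by
  ext a b s t
  fin_cases a <;> fin_cases b <;> fin_cases s <;> fin_cases t <;>
    simp [gateBlocks_apply, cnot, cnotPerm, PEquiv.toMatrix_apply, pauliX]

lemma gateBlocks_cnotSwap :
    gateBlocks cnotSwap = !![single 0 0 1, single 1 0 1; single 1 1 1, single 0 1 1] := by
  ext a b s t
  fin_cases a <;> fin_cases b <;> fin_cases s <;> fin_cases t <;>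
    simp [gateBlocks_apply, cnotSwap, cnotPerm, PEquiv.toMatrix_apply]

lemma conjTranspose_pauliX : pauliXᴴ = pauliX := by
  ext i j
  fin_cases i <;> fin_cases j <;> simp [pauliX]

lemma pauliX_mul_self : pauliX * pauliX = 1 := by
  simp [pauliX, one_fin_two]

/-- The reflection of the witness circuit `C(W̃, X̃)`. It acts on the first three qubits only, by
`|p, q, r⟩ ↦ |p + q, q, p + q + r⟩`. -/
def reflectedCircuit (n : ℕ) : RegisterOp (n + 3) :=
  embed2 (n + 2) 0 cnotSwap * embed2 (n + 2) 1 cnot * embed2 (n + 2) 0 cnot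

lemma splitFirst_embed2_zero_cnot (n : ℕ) :
    splitFirst (n + 1) (embed2 (n + 1) 0 cnot) = !![1, 0; 0, onFirst n pauliX] := by
  ext a b : 2
  rw [splitFirst_embed2_zero, gateBlocks_cnot]
  fin_cases a <;> fin_cases b <;> simp

lemma splitFirst_embed2_zero_cnotSwap (n : ℕ) :
    splitFirst (n + 1) (embed2 (n + 1) 0 cnotSwap) =
      !![onFirst n (single 0 0 1), onFirst n (single 1 0 1);
         onFirst n (single 1 1 1), onFirst n (single 0 1 1)] := by
  ext a b : 2
  rw [splitFirst_embed2_zero, gateBlocks_cnotSwap]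
  fin_cases a <;> fin_cases b <;> simp

lemma conjTranspose_cnot : cnotᴴ = cnot := by
  have : cnotPerm⁻¹ = cnotPerm := by decide
  rw [cnot, conjTranspose_permMatrix, this]

lemma splitFirst_reflectedCircuit_diag (n : ℕ) :
    splitFirst (n + 2) (reflectedCircuit n) 0 0 =
        onFirst (n + 1) (single 0 0 1) * embed2 (n + 1) 0 cnot ∧
      splitFirst (n + 2) (reflectedCircuit n) 1 1 =
        onFirst (n + 1) (single 0 1 1) * embed2 (n + 1) 0 cnot * onFirst (n + 1) pauliX := by
  have one_eq_succ : (1 : Fin (n + 2)) = (0 : Fin (n + 1)).succ := rfl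
  rw [reflectedCircuit, one_eq_succ, map_mul, map_mul, splitFirst_embed2_zero_cnotSwap,
    splitFirst_embed2_succ, splitFirst_embed2_zero_cnot, scalar_apply]
  constructor <;> simp [mul_apply, Fin.sum_univ_two]

lemma splitFirst_crossBlock_reflectedCircuit (n : ℕ) :
    splitFirst (n + 1) (crossBlock (reflectedCircuit n)) = !![onFirst n pauliX, 0; 0, 0] := by
  obtain ⟨h₀, h₁⟩ := splitFirst_reflectedCircuit_diag n
  -- CNOT conjugates `X ⊗ 1` to `X ⊗ X`, and `|0⟩⟨0| X |1⟩⟨0| = |0⟩⟨0|`.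
  simp only [crossBlock, h₀, h₁, conjTranspose_mul, conjTranspose_onFirst, conjTranspose_embed2,
    conjTranspose_pauliX, conjTranspose_cnot, conjTranspose_single, map_mul,
    splitFirst_embed2_zero_cnot, splitFirst_onFirst]
  ext a b x y
  fin_cases a <;> fin_cases b <;>
    simp [mul_apply, Fin.sum_univ_two, single_apply, pauliX, vecMul, dotProduct]

lemma crossBlock_reflectedCircuit_mul_self_ne (n : ℕ) (t d : ℂ) :
    crossBlock (reflectedCircuit n) * crossBlock (reflectedCircuit n) ≠
      t • crossBlock (reflectedCircuit n) - d • 1 := by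
  intro h
  have hsplit := congrArg (splitFirst (n + 1)) h
  simp only [map_mul, map_sub, map_smul, map_one, splitFirst_crossBlock_reflectedCircuit] at hsplit
  have d_eq_zero : d = 0 := by simpa using congrFun₂ hsplit 1 1
  have one_eq : 1 = t • onFirst n pauliX := by
    simpa [d_eq_zero, ← map_mul, pauliX_mul_self] using congrFun₂ hsplit 0 0
  have := congrFun₂ one_eq (Fin.cons 0 0) (Fin.cons 0 0)
  simp [onFirst_apply_cons, pauliX] at this

lemma exists_revOp_mul_twoFloor_mul_revOp_eq (n : ℕ) :
    ∃ Wt Xt : Fin (n + 2) → Gate,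
      (∀ k, Wt k ∈ unitaryGroup (Fin 2 × Fin 2) ℂ) ∧
      (∀ k, Xt k ∈ unitaryGroup (Fin 2 × Fin 2) ℂ) ∧
      revOp (n + 2) * twoFloor (n + 2) Wt Xt * revOp (n + 2) = reflectedCircuit n := by
  let W : Fin (n + 2) → Gate := Fin.cons cnotSwap (Fin.cons cnot 1)
  let X : Fin (n + 2) → Gate := Fin.cons cnot 1
  have hW (k) : W k ∈ unitaryGroup (Fin 2 × Fin 2) ℂ := by
    refine Fin.cases ?_ (Fin.cases ?_ fun _ => ?_) k
    · exact permMatrix_mem_unitaryGroup _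
    · exact permMatrix_mem_unitaryGroup _
    · exact one_mem _
  have hX (k) : X k ∈ unitaryGroup (Fin 2 × Fin 2) ℂ :=
    Fin.cases (permMatrix_mem_unitaryGroup _) (fun _ => one_mem _) k
  refine ⟨fun k => (W k.rev).flip, fun k => (X k.rev).flip,
    fun _ => Gate.flip_mem_unitaryGroup (hW _), fun _ => Gate.flip_mem_unitaryGroup (hX _), ?_⟩
  rw [revOp_mul_mul_revOp, twoFloor, map_mul, reflect_ascStair, reflect_descStair]
  simp [reflectedCircuit, W, X, List.finRange_succ, Function.comp_def, embed2_one, mul_assoc]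

/-- For every `N ≥ 2` there exist two-qubit unitaries `W̃_1, …, W̃_N`,
`X̃_2, …, X̃_N` such that the spatial reflection of the two-floor staircase circuit
`C(W̃, X̃)` is not equal to any two-floor staircase circuit `C(W, X)` of the original
orientation. -/
theorem stmt_6 (N : ℕ) (hN : 2 ≤ N) :
    ∃ Wt Xt : Fin N → Matrix (Fin 2 × Fin 2) (Fin 2 × Fin 2) ℂ,
      (∀ k, Wt k ∈ Matrix.unitaryGroup (Fin 2 × Fin 2) ℂ) ∧
      (∀ k, Xt k ∈ Matrix.unitaryGroup (Fin 2 × Fin 2) ℂ) ∧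
      ∀ W X : Fin N → Matrix (Fin 2 × Fin 2) (Fin 2 × Fin 2) ℂ,
        (∀ k, W k ∈ Matrix.unitaryGroup (Fin 2 × Fin 2) ℂ) →
        (∀ k, X k ∈ Matrix.unitaryGroup (Fin 2 × Fin 2) ℂ) →
        revOp N * twoFloor N Wt Xt * revOp N ≠ twoFloor N W X := by
  obtain ⟨n, rfl⟩ := Nat.exists_eq_add_of_le' hN
  obtain ⟨Wt, Xt, hWt, hXt, hreflect⟩ := exists_revOp_mul_twoFloor_mul_revOp_eq n
  refine ⟨Wt, Xt, hWt, hXt, fun W X hW hX h => ?_⟩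
  obtain ⟨t, d, hquad⟩ :=
    exists_crossBlock_twoFloor_mul_self (fun k => hW k.succ) (fun k => hX k.succ)
  rw [← h, hreflect] at hquad
  exact crossBlock_reflectedCircuit_mul_self_ne n t d hquad

end
end

section
/- If (A, 𝟙_D) is a semi-simple matrix-product unitary with periodic boundary conditions (b = 𝟙_D, so U_N is unitary for every N ≥ 2), then the MPU factorizes after blocking: there exist an integer q ≥ 1, a real number θ, and a unitary V on ℂ^{d^q} such that for every N ≥ 2, U_{qN} = e^{iθN} V^{⊗N} under the natural identification (ℂ^d)^{⊗qN} ≅ (ℂ^{d^q})^{⊗N}. -/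
open Matrix Kronecker

noncomputable section

/-- The bulk product `A^{i_1 j_1} ⋯ A^{i_N j_N}` of a uniform tensor. -/
def uProd (d D : ℕ) (A : Fin d → Fin d → Matrix (Fin D) (Fin D) ℂ) (N : ℕ)
    (i j : Fin N → Fin d) : Matrix (Fin D) (Fin D) ℂ :=
  ((List.finRange N).map (fun k => A (i k) (j k))).prod

/-- The matrix-product operator `U_N` generated by the uniform tensor `A` with boundary
matrix `b`:  `⟨i_1 … i_N|U_N|j_1 … j_N⟩ = Tr(b A^{i_1 j_1} ⋯ A^{i_N j_N})`. -/
def uMPO (d D : ℕ) (A : Fin d → Fin d → Matrix (Fin D) (Fin D) ℂ)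
    (b : Matrix (Fin D) (Fin D) ℂ) (N : ℕ) :
    Matrix (Fin N → Fin d) (Fin N → Fin d) ℂ :=
  Matrix.of fun i j => (b * uProd d D A N i j).trace

/-- `Σ_{i,j,j'} M_{j'j} · conj(A^{ij'}) ⊗ A^{ij}` (Kronecker product, entrywise
conjugation). -/
def uSmatM (d D : ℕ) (A : Fin d → Fin d → Matrix (Fin D) (Fin D) ℂ)
    (M : Matrix (Fin d) (Fin d) ℂ) : Matrix (Fin D × Fin D) (Fin D × Fin D) ℂ :=
  ∑ i, ∑ j, ∑ j', M j' j • (((A i j').map (starRingEnd ℂ)) ⊗ₖ (A i j))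

/-- `S_α`, where `α = 0` (for which `σ 0 = 𝟙`) carries the extra `1/d` factor, so that
`S_0 = E` is the transfer matrix. -/
def uS (d D : ℕ) (A : Fin d → Fin d → Matrix (Fin D) (Fin D) ℂ)
    (σ : Fin (d * d) → Matrix (Fin d) (Fin d) ℂ) (α : Fin (d * d)) :
    Matrix (Fin D × Fin D) (Fin D × Fin D) ℂ :=
  (if (α : ℕ) = 0 then ((d : ℂ))⁻¹ else 1) • uSmatM d D A (σ α)

/-- The transfer matrix `E = (1/d) Σ_{i,j} conj(A^{ij}) ⊗ A^{ij}`. -/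
def uE (d D : ℕ) (A : Fin d → Fin d → Matrix (Fin D) (Fin D) ℂ) :
    Matrix (Fin D × Fin D) (Fin D × Fin D) ℂ :=
  ((d : ℂ))⁻¹ • uSmatM d D A 1

/-- The word `S_{α_N} ⋯ S_{α_2} S_{α_1}`. -/
def uSword (d D : ℕ) (A : Fin d → Fin d → Matrix (Fin D) (Fin D) ℂ)
    (σ : Fin (d * d) → Matrix (Fin d) (Fin d) ℂ) (N : ℕ) (α : Fin N → Fin (d * d)) :
    Matrix (Fin D × Fin D) (Fin D × Fin D) ℂ :=
  ((List.finRange N).reverse.map (fun k => uS d D A σ (α k))).prod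

/-- The span `𝒜 = span_ℂ{S_α}`. -/
def uAspan (d D : ℕ) (A : Fin d → Fin d → Matrix (Fin D) (Fin D) ℂ)
    (σ : Fin (d * d) → Matrix (Fin d) (Fin d) ℂ) :
    Submodule ℂ (Matrix (Fin D × Fin D) (Fin D × Fin D) ℂ) :=
  Submodule.span ℂ (Set.range (uS d D A σ))

/-- `(A, b)` is a semi-simple matrix-product unitary: `U_N` is unitary for every
`N ≥ 2`, and after a similarity transformation `P` the span `𝒜` admits a direct-sum
decomposition `ℂ^{D²} = V_1 ⊕ ⋯ ⊕ V_r` into jointly invariant subspaces on each of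
which it acts irreducibly. -/
def SemiSimpleMPU (d D : ℕ) (A : Fin d → Fin d → Matrix (Fin D) (Fin D) ℂ)
    (b : Matrix (Fin D) (Fin D) ℂ)
    (σ : Fin (d * d) → Matrix (Fin d) (Fin d) ℂ) : Prop :=
  (∀ N, 2 ≤ N → uMPO d D A b N ∈ Matrix.unitaryGroup (Fin N → Fin d) ℂ) ∧
  ∃ P : Matrix (Fin D × Fin D) (Fin D × Fin D) ℂ, IsUnit P ∧
  ∃ r : ℕ, ∃ V : Fin r → Submodule ℂ ((Fin D × Fin D) → ℂ),
    iSupIndep V ∧ (⨆ i, V i) = ⊤ ∧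
    (∀ S ∈ uAspan d D A σ, ∀ i, ∀ v ∈ V i, (P * S * P⁻¹).mulVec v ∈ V i) ∧
    (∀ i, ∀ W : Submodule ℂ ((Fin D × Fin D) → ℂ), W ≤ V i →
      (∀ S ∈ uAspan d D A σ, ∀ v ∈ W, (P * S * P⁻¹).mulVec v ∈ W) →
      W = ⊥ ∨ W = V i)

/-
Write `S(X)` for the dressed transfer matrix. The traces `tr (S(X₁) ⋯ S(X_N))` only see
`U_N† U_N`, so unitarity says that they equal `∏ tr Xₖ` for `N ≥ 2`. Consider the non-unital algebra
generated by the pairs `(S(X), tr X)`. If `(x, 0)` belongs to it, every element of the left ideal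
generated by `x` has traceless powers from exponent two on, hence is nilpotent; since `𝒜` acts
semisimply, `x = 0`. Therefore `S(X) = tr X • E` with `E² = E`.

The first identity says that the bond slices `B_{ab} = (A^{ij}_{ab})_{ij}` have scalar products
`B_{ab}† B_{ce}`, so all of them are multiples of a single unitary `u`: `A^{ij} = u_{ij} M` and
`E = conj M ⊗ M`. The second one makes `M` a phase `z` times an idempotent of rank `tr E = 1`, so
`tr M^N = z^N` and `U_N = (z u)^{⊗N}`, already without blocking.
-/

section TracePairs

variable {K V : Type*} [Field K] [AddCommGroup V] [Module K V]

/- Split the characteristic polynomial as `X ^ m * g` with `g` prime to `X`. The spectral projection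
off the generalised kernel is a polynomial in `z` divisible by `X ^ n`, so its trace vanishes, and
an idempotent of trace zero is zero. -/
open Polynomial in
theorem isNilpotent_of_trace_pow_eq_zero [CharZero K] [FiniteDimensional K V] {z : Module.End K V}
    {n : ℕ} (hz : ∀ k, n ≤ k → LinearMap.trace K V (z ^ k) = 0) : IsNilpotent z := by
  have trace_aeval (f : K[X]) : LinearMap.trace K V (aeval z (f * X ^ n)) = 0 := by
    induction f using Polynomial.induction_on' with
    | add p q hp hq => rw [add_mul, map_add, map_add, hp, hq, add_zero]
    | monomial k a =>
      rw [monomial_mul_X_pow, aeval_monomial, ← Algebra.smul_def, map_smul, hz _ (by lia),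
        smul_zero]
  obtain ⟨g, hg, hXg⟩ := exists_eq_pow_rootMultiplicity_mul_and_not_dvd z.charpoly
    z.charpoly_monic.ne_zero 0
  rw [C_0, sub_zero] at hg hXg
  set m := z.charpoly.rootMultiplicity 0
  obtain ⟨a, b, hab⟩ : IsCoprime (X ^ (m + n)) g :=
    ((irreducible_X.coprime_iff_not_dvd).2 hXg).pow_left
  have hcharpoly : aeval z (X ^ m * g) = 0 := hg ▸ z.aeval_self_charpoly
  have hidem : IsIdempotentElem (aeval z (a * X ^ (m + n))) := by
    have hpoly : a * X ^ (m + n) * (a * X ^ (m + n)) =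
        a * X ^ (m + n) - a * b * X ^ n * (X ^ m * g) := by
      linear_combination a * X ^ (m + n) * hab - a * b * g * pow_add (X : K[X]) m n
    rw [IsIdempotentElem, ← map_mul, hpoly, map_sub, map_mul _ (a * b * X ^ n), hcharpoly,
      mul_zero, sub_zero]
  have hzero : aeval z (a * X ^ (m + n)) = 0 :=
    LinearMap.IsIdempotentElem.eq_zero_of_trace_eq_zero hidem (by
      rw [pow_add, ← mul_assoc]
      exact trace_aeval _)
  refine ⟨m, ?_⟩
  calc z ^ m = aeval z (X ^ m * (a * X ^ (m + n) + b * g)) := by rw [hab]; simp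
    _ = aeval z (X ^ m * (a * X ^ (m + n)) + b * (X ^ m * g)) := by ring_nf
    _ = 0 := by
      rw [map_add, map_mul _ (X ^ m), map_mul _ b, hzero, hcharpoly, mul_zero, mul_zero, add_zero]

/-- A subspace `U` that is invariant under every operator of `s` and has no invariant subspaces
other than `0` and itself. The zero subspace is allowed. -/
structure IsIrreducibleOn (s : Set (Module.End K V)) (U : Submodule K V) : Prop where
  invariant : ∀ f ∈ s, U ∈ f.invtSubmodule
  eq_bot_or_eq : ∀ W ≤ U, (∀ f ∈ s, W ∈ f.invtSubmodule) → W = ⊥ ∨ W = U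

theorem IsIrreducibleOn.comap_equiv {V' : Type*} [AddCommGroup V'] [Module K V'] (e : V ≃ₗ[K] V')
    {s : Set (Module.End K V)} {U : Submodule K V'} (hU : IsIrreducibleOn (e.conj '' s) U) :
    IsIrreducibleOn s (U.comap e.toLinearMap) where
  invariant f hf v hv := by simpa using hU.invariant _ (Set.mem_image_of_mem _ hf) hv
  eq_bot_or_eq W hWU hW := by
    have hmap := hU.eq_bot_or_eq (W.map e.toLinearMap) (Submodule.map_le_iff_le_comap.2 hWU) (by
      rintro _ ⟨f, hf, rfl⟩ _ ⟨w, hw, rfl⟩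
      simpa using hW f hf hw)
    refine hmap.imp (fun h => by simpa using h) fun h => ?_
    rw [← h, Submodule.comap_map_eq_of_injective e.injective]

theorem IsIrreducibleOn.invariant_adjoin {s : Set (Module.End K V)} {U : Submodule K V}
    (hU : IsIrreducibleOn s U) {y : Module.End K V} (hy : y ∈ Algebra.adjoin K s) :
    U ∈ y.invtSubmodule := by
  induction hy using Algebra.adjoin_induction with
  | mem _ hf => exact hU.invariant _ hf
  | algebraMap c => exact fun v hv => U.smul_mem c hv
  | add f g _ _ hf hg => exact fun v hv => U.add_mem (hf hv) (hg hv)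
  | mul _ g _ _ hf hg => exact fun v hv => hf (hg hv)

/- If `x v ≠ 0`, irreducibility gives `v = y (x v)` for some `y`, and `y * x` is not nilpotent. -/
theorem IsIrreducibleOn.apply_eq_zero_of_isNilpotent_mul {s : Set (Module.End K V)}
    {U : Submodule K V} (hU : IsIrreducibleOn s U) {x : Module.End K V}
    (hx : x ∈ Algebra.adjoin K s) (hnil : ∀ y ∈ Algebra.adjoin K s, IsNilpotent (y * x))
    {v : V} (hv : v ∈ U) : x v = 0 := by
  let W : Submodule K V := (Algebra.adjoin K s).toSubmodule.map (LinearMap.applyₗ (x v))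
  have hWU : W ≤ U := by
    rintro _ ⟨y, hy, rfl⟩
    exact hU.invariant_adjoin hy (hU.invariant_adjoin hx hv)
  have hW : ∀ f ∈ s, W ∈ f.invtSubmodule := by
    rintro f hf _ ⟨y, hy, rfl⟩
    exact ⟨f * y, (Algebra.adjoin K s).mul_mem (Algebra.subset_adjoin hf) hy, rfl⟩
  rcases hU.eq_bot_or_eq W hWU hW with hbot | htop
  · have hmem : x v ∈ W := ⟨1, (Algebra.adjoin K s).one_mem, rfl⟩
    simpa [hbot] using hmem
  · obtain ⟨y, hy, hyv⟩ : v ∈ W := htop ▸ hv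
    obtain ⟨k, hk⟩ := hnil y hy
    have hpow : ((y * x) ^ k) v = v := by
      rw [Module.End.pow_apply]
      exact Function.iterate_fixed hyv k
    rw [← hpow, hk, LinearMap.zero_apply, map_zero]

theorem mul_mem_nonUnitalAdjoin {B : Type*} [Ring B] [Algebra K B] {s : Set B} {r p : B}
    (hr : r ∈ Algebra.adjoin K s) (hp : p ∈ NonUnitalAlgebra.adjoin K s) :
    r * p ∈ NonUnitalAlgebra.adjoin K s := by
  induction hr using Algebra.adjoin_induction generalizing p with
  | mem b hb => exact mul_mem (NonUnitalAlgebra.subset_adjoin K hb) hp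
  | algebraMap c => rw [← Algebra.smul_def]; exact SMulMemClass.smul_mem c hp
  | add a b _ _ ha hb => rw [add_mul]; exact add_mem (ha hp) (hb hp)
  | mul a b _ _ ha hb => rw [mul_assoc]; exact ha (hb hp)

/- For `r` in the unital algebra, the powers of `r * p` have second component zero, hence
traceless first component from exponent two on. So `p.1` generates a nil left ideal, which acts as
zero on every irreducible summand. -/
theorem fst_eq_zero_of_snd_eq_zero [CharZero K] [FiniteDimensional K V]
    {s : Set (Module.End K V × K)}
    (htrace : ∀ p ∈ NonUnitalAlgebra.adjoin K s, ∀ q ∈ NonUnitalAlgebra.adjoin K s,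
      LinearMap.trace K V (p * q).1 = (p * q).2)
    {ι : Sort*} {U : ι → Submodule K V} (hU : ∀ i, IsIrreducibleOn (Prod.fst '' s) (U i))
    (htop : ⨆ i, U i = ⊤) {p : Module.End K V × K} (hp : p ∈ NonUnitalAlgebra.adjoin K s)
    (hp2 : p.2 = 0) : p.1 = 0 := by
  have adjoin_fst : Algebra.adjoin K (Prod.fst '' s) =
      (Algebra.adjoin K s).map (AlgHom.fst K (Module.End K V) K) :=
    (AlgHom.map_adjoin (AlgHom.fst K (Module.End K V) K) s).symm
  have hpadj : p ∈ Algebra.adjoin K s := NonUnitalAlgebra.adjoin_le_algebra_adjoin K s hp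
  have hnil : ∀ y ∈ Algebra.adjoin K (Prod.fst '' s), IsNilpotent (y * p.1) := by
    rw [adjoin_fst]
    rintro _ ⟨r, hr, rfl⟩
    refine isNilpotent_of_trace_pow_eq_zero (n := 2) fun k hk => ?_
    obtain ⟨k, rfl⟩ := Nat.exists_eq_add_of_le' hk
    have hrp := mul_mem_nonUnitalAdjoin hr hp
    have hpow : (r * p) ^ (k + 1) ∈ NonUnitalAlgebra.adjoin K s := by
      rw [pow_succ]
      exact mul_mem_nonUnitalAdjoin (pow_mem (mul_mem hr hpadj) k) hrp
    have h := htrace _ hpow _ hrp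
    rw [← pow_succ] at h
    simpa [hp2] using h
  have hker : ⨆ i, U i ≤ LinearMap.ker p.1 := iSup_le fun i v hv =>
    (hU i).apply_eq_zero_of_isNilpotent_mul (adjoin_fst ▸ ⟨p, hpadj, rfl⟩) hnil hv
  rwa [htop, top_le_iff, LinearMap.ker_eq_top] at hker

theorem exists_list_of_mem_subsemigroup_closure {M : Type*} [Monoid M] {s : Set M} {x : M}
    (hx : x ∈ Subsemigroup.closure s) : ∃ l : List M, l ≠ [] ∧ (∀ y ∈ l, y ∈ s) ∧ l.prod = x := by
  induction hx using Subsemigroup.closure_induction with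
  | mem x hx => exact ⟨[x], by simpa⟩
  | mul x y _ _ hx hy =>
    obtain ⟨l, hl, hls, rfl⟩ := hx
    obtain ⟨l', -, hls', rfl⟩ := hy
    exact ⟨l ++ l', by simp [hl], by grind, List.prod_append⟩

theorem map_mul_eq_of_map_list_prod_eq {B N : Type*} [Ring B] [Algebra K B] [AddCommGroup N]
    [Module K N] {φ ψ : B →ₗ[K] N} {s : Set B}
    (hs : ∀ l : List B, 2 ≤ l.length → (∀ b ∈ l, b ∈ s) → φ l.prod = ψ l.prod) {p q : B}
    (hp : p ∈ NonUnitalAlgebra.adjoin K s) (hq : q ∈ NonUnitalAlgebra.adjoin K s) :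
    φ (p * q) = ψ (p * q) := by
  rw [← NonUnitalSubalgebra.mem_toSubmodule, NonUnitalAlgebra.adjoin_eq_span] at hp hq
  induction hp, hq using Submodule.span_induction₂ with
  | mem_mem x y hx hy =>
    obtain ⟨l, hl, hls, rfl⟩ := exists_list_of_mem_subsemigroup_closure hx
    obtain ⟨l', hl', hls', rfl⟩ := exists_list_of_mem_subsemigroup_closure hy
    have hlen := List.length_pos_iff.2 hl
    have hlen' := List.length_pos_iff.2 hl'
    rw [← List.prod_append]
    exact hs _ (by rw [List.length_append]; lia) (by grind)
  | zero_left => simp only [zero_mul, map_zero]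
  | zero_right => simp only [mul_zero, map_zero]
  | add_left x y z _ _ _ hx hy => simp only [add_mul, map_add, hx, hy]
  | add_right x y z _ _ _ hx hy => simp only [mul_add, map_add, hx, hy]
  | smul_left c x y _ _ h => simp only [smul_mul_assoc, map_smul, h]
  | smul_right c x y _ _ h => simp only [mul_smul_comm, map_smul, h]

/- The pairs `(φ x, τ x)` generate a non-unital algebra in which the first component is determined
by the second; compare `(φ x, τ x)` with `τ x • (φ e, 1)`, and `(φ e, 1) ^ 2` with `(φ e, 1)`. -/
theorem exists_idempotent_of_trace_list_prod_eq [CharZero K] [FiniteDimensional K V] {X : Type*}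
    {φ : X → Module.End K V} {τ : X → K}
    (htrace : ∀ l : List X, 2 ≤ l.length →
      LinearMap.trace K V (l.map φ).prod = (l.map τ).prod)
    {ι : Sort*} {U : ι → Submodule K V} (hU : ∀ i, IsIrreducibleOn (Set.range φ) (U i))
    (htop : ⨆ i, U i = ⊤) {e : X} (he : τ e = 1) :
    IsIdempotentElem (φ e) ∧ ∀ x, φ x = τ x • φ e := by
  let pair : X → Module.End K V × K := fun x => (φ x, τ x)
  have hpair (x : X) : pair x ∈ NonUnitalAlgebra.adjoin K (Set.range pair) :=
    NonUnitalAlgebra.subset_adjoin K ⟨x, rfl⟩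
  have htrace_mul : ∀ p ∈ NonUnitalAlgebra.adjoin K (Set.range pair),
      ∀ q ∈ NonUnitalAlgebra.adjoin K (Set.range pair),
      LinearMap.trace K V (p * q).1 = (p * q).2 := by
    refine fun p hp q hq => map_mul_eq_of_map_list_prod_eq
      (φ := LinearMap.trace K V ∘ₗ LinearMap.fst K _ K) (ψ := LinearMap.snd K _ K)
      (fun l hl hls => ?_) hp hq
    obtain ⟨w, rfl⟩ : l ∈ Set.range (List.map pair) := by rwa [Set.range_list_map]
    have hfst : (w.map pair).prod.1 = (w.map φ).prod := by
      simpa [pair, Function.comp_def] using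
        map_list_prod (RingHom.fst (Module.End K V) K) (w.map pair)
    have hsnd : (w.map pair).prod.2 = (w.map τ).prod := by
      simpa [pair, Function.comp_def] using
        map_list_prod (RingHom.snd (Module.End K V) K) (w.map pair)
    change LinearMap.trace K V (w.map pair).prod.1 = (w.map pair).prod.2
    rw [hfst, hsnd, htrace w (by simpa using hl)]
  have eq_zero {p : Module.End K V × K} (hp : p ∈ NonUnitalAlgebra.adjoin K (Set.range pair))
      (hp2 : p.2 = 0) : p.1 = 0 :=
    fst_eq_zero_of_snd_eq_zero htrace_mul (by rwa [← Set.range_comp]) htop hp hp2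
  constructor
  · refine sub_eq_zero.1 (eq_zero (p := pair e * pair e - pair e) ?_ ?_)
    · exact sub_mem (mul_mem (hpair e) (hpair e)) (hpair e)
    · simp [pair, he]
  · intro x
    refine sub_eq_zero.1 (eq_zero (p := pair x - τ x • pair e) ?_ ?_)
    · exact sub_mem (hpair x) (SMulMemClass.smul_mem _ (hpair e))
    · simp [pair, he]

end TracePairs

section UnitaryMatrices

theorem submatrix_equiv_mem_unitaryGroup {m n R : Type*} [Fintype m] [DecidableEq m] [Fintype n]
    [DecidableEq n] [CommRing R] [StarRing R] {u : Matrix n n R} (hu : u ∈ unitaryGroup n R)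
    (e : m ≃ n) : u.submatrix e e ∈ unitaryGroup m R := by
  rw [mem_unitaryGroup_iff, star_eq_conjTranspose, conjTranspose_submatrix, submatrix_mul_equiv,
    ← star_eq_conjTranspose, mem_unitaryGroup_iff.1 hu, submatrix_one_equiv]

variable {𝕜 n : Type*} [RCLike 𝕜] [Fintype n] [DecidableEq n]

open scoped ComplexOrder in
theorem exists_smul_mem_unitaryGroup_of_conjTranspose_mul_self {B : Matrix n n 𝕜} (hB : B ≠ 0)
    {c : 𝕜} (hc : Bᴴ * B = c • 1) : ∃ r : 𝕜, r • B ∈ unitaryGroup n 𝕜 := by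
  have hc0 : c ≠ 0 := by
    rintro rfl
    exact hB (conjTranspose_mul_self_eq_zero.1 (by rw [hc, zero_smul]))
  obtain ⟨i, -, -⟩ : ∃ i j, B i j ≠ 0 := by
    by_contra! h
    exact hB (ext h)
  have hnonneg : 0 ≤ c := by
    simpa [hc] using (posSemidef_conjTranspose_mul_self B).diag_nonneg (i := i)
  obtain ⟨x, hx, rfl⟩ := RCLike.nonneg_iff_exists_ofReal.1 hnonneg
  have hsqrt : √x * √x = x := Real.mul_self_sqrt hx
  refine ⟨((√x)⁻¹ : ℝ), ?_⟩
  rw [mem_unitaryGroup_iff', star_smul, star_eq_conjTranspose, Matrix.smul_mul, Matrix.mul_smul, hc,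
    smul_smul, smul_smul, RCLike.star_def, RCLike.conj_ofReal]
  have hx0 : x ≠ 0 := by simpa using hc0
  have hone : (√x)⁻¹ * (√x)⁻¹ * x = 1 := by
    rw [← mul_inv, hsqrt, inv_mul_cancel₀ hx0]
  rw [← RCLike.ofReal_mul, ← RCLike.ofReal_mul, hone, RCLike.ofReal_one, one_smul]

theorem exists_unitary_eq_smul_of_conjTranspose_mul {ι : Type*} {B : ι → Matrix n n 𝕜}
    (hB : ∀ a b, ∃ c : 𝕜, (B a)ᴴ * B b = c • 1) :
    ∃ u ∈ unitaryGroup n 𝕜, ∃ m : ι → 𝕜, ∀ a, B a = m a • u := by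
  by_cases hzero : ∀ a, B a = 0
  · exact ⟨1, one_mem _, 0, by simpa using hzero⟩
  push Not at hzero
  obtain ⟨a, ha⟩ := hzero
  choose c hc using hB
  obtain ⟨r, hu⟩ := exists_smul_mem_unitaryGroup_of_conjTranspose_mul_self ha (hc a a)
  refine ⟨r • B a, hu, fun b => star r * c a b, fun b => ?_⟩
  calc B b = (r • B a) * (star (r • B a) * B b) := by
        rw [← mul_assoc, mem_unitaryGroup_iff.1 hu, one_mul]
    _ = (star r * c a b) • r • B a := by
        rw [star_smul, star_eq_conjTranspose, Matrix.smul_mul (star r), hc, smul_smul,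
          Matrix.mul_smul, mul_one]

end UnitaryMatrices

section IdempotentDouble

theorem exists_norm_one_smul_of_conj_kronecker_self_eq {𝕜 m n : Type*} [RCLike 𝕜]
    {X Y : Matrix m n 𝕜}
    (h : X.map (starRingEnd 𝕜) ⊗ₖ X = Y.map (starRingEnd 𝕜) ⊗ₖ Y) :
    ∃ z : 𝕜, ‖z‖ = 1 ∧ X = z • Y := by
  have hentry (a c : m) (b e : n) :
      starRingEnd 𝕜 (X a b) * X c e = starRingEnd 𝕜 (Y a b) * Y c e :=
    congr_fun₂ h (a, c) (b, e)
  have hnorm (a : m) (b : n) : ‖X a b‖ = ‖Y a b‖ := by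
    have hsq := congr_arg norm (hentry a a b b)
    simp only [norm_mul, RCLike.norm_conj] at hsq
    exact (mul_self_inj (norm_nonneg _) (norm_nonneg _)).1 hsq
  by_cases hX : ∀ a b, X a b = 0
  · refine ⟨1, norm_one, ?_⟩
    ext a b
    rw [one_smul, hX, eq_comm, ← norm_eq_zero, ← hnorm, hX, norm_zero]
  push Not at hX
  obtain ⟨a, b, hab⟩ := hX
  refine ⟨starRingEnd 𝕜 (Y a b) / starRingEnd 𝕜 (X a b), ?_, ?_⟩
  · rw [norm_div, RCLike.norm_conj, RCLike.norm_conj, ← hnorm, div_self (norm_ne_zero_iff.2 hab)]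
  · ext c e
    rw [Matrix.smul_apply, smul_eq_mul, div_mul_eq_mul_div, ← hentry,
      mul_div_cancel_left₀ _ ((map_ne_zero _).2 hab)]

theorem trace_conj_kronecker {R m n : Type*} [CommSemiring R] [StarRing R] [Fintype m]
    [Fintype n] (X : Matrix m m R) (Y : Matrix n n R) :
    (X.map (starRingEnd R) ⊗ₖ Y).trace = star X.trace * Y.trace := by
  rw [trace_kronecker]
  exact congr_arg (· * Y.trace) (map_sum (starRingEnd R) _ _).symm

theorem exists_natCast_eq_trace_of_isIdempotentElem {K n : Type*} [Field K] [Fintype n]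
    {P : Matrix n n K} (hP : IsIdempotentElem P) : ∃ t : ℕ, P.trace = t := by
  classical
  have hlin : IsIdempotentElem (toLin' P) := hP.map toLinAlgEquiv'
  exact ⟨_, by rw [← trace_toLin'_eq, (LinearMap.IsIdempotentElem.isProj_range _ hlin).trace]⟩

theorem exists_trace_pow_eq_pow {𝕜 n : Type*} [RCLike 𝕜] [Fintype n] [DecidableEq n]
    {M : Matrix n n 𝕜} (hidem : IsIdempotentElem (M.map (starRingEnd 𝕜) ⊗ₖ M))
    (htr : (M.map (starRingEnd 𝕜) ⊗ₖ M).trace = 1) :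
    ∃ z : 𝕜, ‖z‖ = 1 ∧ ∀ N, N ≠ 0 → (M ^ N).trace = z ^ N := by
  obtain ⟨z, hz, hMM⟩ : ∃ z : 𝕜, ‖z‖ = 1 ∧ M * M = z • M := by
    refine exists_norm_one_smul_of_conj_kronecker_self_eq ?_
    rw [Matrix.map_mul, mul_kronecker_mul, hidem.eq]
  have hz0 : z ≠ 0 := norm_ne_zero_iff.1 (hz ▸ one_ne_zero)
  have hnorm : ‖M.trace‖ = 1 := by
    rw [trace_conj_kronecker] at htr
    have hsq := congr_arg norm htr
    rw [norm_mul, norm_star, norm_one] at hsq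
    nlinarith [norm_nonneg M.trace]
  have hproj : IsIdempotentElem (z⁻¹ • M) := by
    rw [IsIdempotentElem, Matrix.smul_mul, Matrix.mul_smul, hMM, inv_smul_smul₀ hz0]
  obtain ⟨t, ht⟩ := exists_natCast_eq_trace_of_isIdempotentElem hproj
  have ht1 : t = 1 := by
    have hnorm_t : ‖(t : 𝕜)‖ = 1 := by
      rw [← ht, trace_smul, norm_smul, norm_inv, hz, hnorm, inv_one, one_mul]
    simpa using hnorm_t
  have htrace : M.trace = z := by
    rw [ht1, Nat.cast_one, trace_smul, smul_eq_mul, inv_mul_eq_one₀ hz0] at ht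
    exact ht.symm
  have hpow (k : ℕ) : M ^ (k + 1) = z ^ k • M := by
    induction k with
    | zero => simp
    | succ k ih => rw [pow_succ, ih, Matrix.smul_mul, hMM, smul_smul, pow_succ]
  refine ⟨z, hz, fun N hN => ?_⟩
  obtain ⟨k, rfl⟩ := Nat.exists_eq_succ_of_ne_zero hN
  rw [hpow, trace_smul, htrace, smul_eq_mul, pow_succ]

end IdempotentDouble

section DressedTransfer

variable {ι κ : Type*} [Fintype ι]

/-- The dressed transfer matrix `S(X)` of a tensor `A`, as a linear function of the operator `X`
inserted on the physical leg; at `X = 𝟙 / d` it is the transfer matrix. For `ι = Fin d` and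
`κ = Fin D` this is `uSmatM`; a general `ι` allows several sites to be blocked into one. -/
def dressedTransfer (A : ι → ι → Matrix κ κ ℂ) :
    Matrix ι ι ℂ →ₗ[ℂ] Matrix (κ × κ) (κ × κ) ℂ where
  toFun X := ∑ i, ∑ j, ∑ j', X j' j • ((A i j').map (starRingEnd ℂ) ⊗ₖ A i j)
  map_add' X Y := by simp only [Matrix.add_apply, add_smul, Finset.sum_add_distrib]
  map_smul' c X := by
    simp only [Matrix.smul_apply, smul_eq_mul, mul_smul, Finset.smul_sum, RingHom.id_apply]

theorem dressedTransfer_apply (A : ι → ι → Matrix κ κ ℂ) (X : Matrix ι ι ℂ) :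
    dressedTransfer A X =
      ∑ i, ∑ j, ∑ j', X j' j • ((A i j').map (starRingEnd ℂ) ⊗ₖ A i j) :=
  rfl

theorem dressedTransfer_submatrix {ι' : Type*} [Fintype ι'] (e : ι' ≃ ι)
    (A : ι → ι → Matrix κ κ ℂ) (X : Matrix ι ι ℂ) :
    dressedTransfer (fun i j => A (e i) (e j)) (X.submatrix e e) = dressedTransfer A X :=
  Fintype.sum_equiv e _ _ fun _ => Fintype.sum_equiv e _ _ fun _ => Fintype.sum_equiv e _ _ fun _ =>
    rfl

theorem dressedTransfer_mul_dressedTransfer [Fintype κ] {ι' : Type*} [Fintype ι']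
    (A : ι → ι → Matrix κ κ ℂ) (B : ι' → ι' → Matrix κ κ ℂ) (X : Matrix ι ι ℂ)
    (Y : Matrix ι' ι' ℂ) :
    dressedTransfer A X * dressedTransfer B Y =
      dressedTransfer (fun i j => A i.1 j.1 * B i.2 j.2) (X ⊗ₖ Y) := by
  simp only [dressedTransfer_apply, Fintype.sum_prod_type, Finset.sum_mul_sum, kroneckerMap_apply,
    Matrix.smul_mul, Matrix.mul_smul, smul_smul, ← mul_kronecker_mul, Matrix.map_mul,
    mul_comm]

theorem trace_dressedTransfer [DecidableEq ι] [Fintype κ] {A : ι → ι → Matrix κ κ ℂ}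
    (hA : (Matrix.of fun i j => (A i j).trace) ∈ unitaryGroup ι ℂ) (X : Matrix ι ι ℂ) :
    (dressedTransfer A X).trace = X.trace := by
  have hunitary (j' j : ι) :
      ∑ i, star (A i j').trace * (A i j).trace = (1 : Matrix ι ι ℂ) j' j := by
    simpa [Matrix.mul_apply, star_apply] using
      congr_fun₂ (mem_unitaryGroup_iff'.1 hA) j' j
  simp only [dressedTransfer_apply, trace_sum, trace_smul, trace_conj_kronecker, smul_eq_mul]
  calc ∑ i, ∑ j, ∑ j', X j' j * (star (A i j').trace * (A i j).trace)
      = ∑ j, ∑ j', X j' j * ∑ i, star (A i j').trace * (A i j).trace := by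
        rw [Finset.sum_comm]
        simp only [Finset.mul_sum, Finset.sum_comm (s := Finset.univ (α := ι)) (f := fun i j' =>
          X j' _ * (star (A i j').trace * (A i _).trace))]
    _ = X.trace := by
        simp only [hunitary, Matrix.one_apply, mul_ite, mul_one, mul_zero, Finset.sum_ite_eq',
          Finset.mem_univ, if_true]
        rfl

theorem uProd_succ (d D : ℕ) (A : Fin d → Fin d → Matrix (Fin D) (Fin D) ℂ) (N : ℕ)
    (i j : Fin (N + 1) → Fin d) :
    uProd d D A (N + 1) i j =
      A (i 0) (j 0) * uProd d D A N (fun k => i k.succ) (fun k => j k.succ) := by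
  simp [uProd, List.finRange_succ, Function.comp_def]

theorem prod_ofFn_dressedTransfer {d D : ℕ} (A : Fin d → Fin d → Matrix (Fin D) (Fin D) ℂ) {N : ℕ}
    (X : Fin N → Matrix (Fin d) (Fin d) ℂ) :
    (List.ofFn fun k => dressedTransfer A (X k)).prod =
      dressedTransfer (uProd d D A N) (Matrix.of fun i j => ∏ k, X k (i k) (j k)) := by
  induction N with
  | zero => simp [dressedTransfer_apply, uProd]
  | succ N ih =>
    rw [List.ofFn_succ, List.prod_cons, ih, dressedTransfer_mul_dressedTransfer,
      ← dressedTransfer_submatrix (Fin.consEquiv fun _ => Fin d)]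
    congr 1
    · congr! 4
      simp [uProd_succ, Fin.consEquiv]
    · ext i j
      simp [Fin.prod_univ_succ, Fin.consEquiv]

theorem trace_prod_map_dressedTransfer {d D : ℕ} {A : Fin d → Fin d → Matrix (Fin D) (Fin D) ℂ}
    {l : List (Matrix (Fin d) (Fin d) ℂ)}
    (hU : uMPO d D A 1 l.length ∈ unitaryGroup (Fin l.length → Fin d) ℂ) :
    (l.map (dressedTransfer A)).prod.trace = (l.map Matrix.trace).prod := by
  rw [← List.ofFn_getElem_eq_map, prod_ofFn_dressedTransfer,
    trace_dressedTransfer (by simpa [uMPO] using hU)]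
  calc ∑ i : Fin l.length → Fin d, ∏ k : Fin l.length, l[(k : ℕ)] (i k) (i k)
      = ∏ k : Fin l.length, l[(k : ℕ)].trace := by
        simp only [Matrix.trace, diag_apply, Finset.prod_univ_sum, Fintype.piFinset_univ]
    _ = (l.map Matrix.trace).prod := Fin.prod_univ_fun_getElem l Matrix.trace

/-- The operator on the physical index obtained from a tensor by fixing its two bond indices. -/
def bondSlice (A : ι → ι → Matrix κ κ ℂ) (a b : κ) : Matrix ι ι ℂ :=
  Matrix.of fun i j => A i j a b

theorem conjTranspose_bondSlice_mul_bondSlice_apply [DecidableEq ι] (A : ι → ι → Matrix κ κ ℂ)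
    (a b c e : κ) (j' j : ι) :
    ((bondSlice A a b)ᴴ * bondSlice A c e) j' j =
      dressedTransfer A (Matrix.single j' j 1) (a, c) (b, e) := by
  simp [dressedTransfer_apply, bondSlice, Matrix.mul_apply, Matrix.sum_apply, Matrix.single_apply,
    ite_and]

theorem conjTranspose_bondSlice_mul_bondSlice_eq_smul_one [DecidableEq ι]
    {A : ι → ι → Matrix κ κ ℂ} {E : Matrix (κ × κ) (κ × κ) ℂ}
    (hE : ∀ X, dressedTransfer A X = X.trace • E) (a b c e : κ) :
    (bondSlice A a b)ᴴ * bondSlice A c e = E (a, c) (b, e) • 1 := by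
  ext j' j
  rw [conjTranspose_bondSlice_mul_bondSlice_apply, hE]
  rcases eq_or_ne j' j with rfl | hne
  · simp
  · simp [hne, trace_single_eq_of_ne]

theorem exists_unitary_smul_of_dressedTransfer [DecidableEq ι] [Nonempty ι]
    {A : ι → ι → Matrix κ κ ℂ} {E : Matrix (κ × κ) (κ × κ) ℂ}
    (hE : ∀ X, dressedTransfer A X = X.trace • E) :
    ∃ u ∈ unitaryGroup ι ℂ, ∃ M : Matrix κ κ ℂ,
      (∀ i j, A i j = u i j • M) ∧ M.map (starRingEnd ℂ) ⊗ₖ M = E := by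
  have hslice := conjTranspose_bondSlice_mul_bondSlice_eq_smul_one hE
  obtain ⟨u, hu, m, hm⟩ := exists_unitary_eq_smul_of_conjTranspose_mul
    (B := fun p : κ × κ => bondSlice A p.1 p.2) fun p q => ⟨_, hslice p.1 p.2 q.1 q.2⟩
  refine ⟨u, hu, Matrix.of fun a b => m (a, b), fun i j => ?_, ?_⟩
  · ext a b
    simpa [bondSlice, mul_comm] using congr_fun₂ (hm (a, b)) i j
  · ext ⟨a, c⟩ ⟨b, e⟩
    have hentry : (star (m (a, b)) * m (c, e)) • (1 : Matrix ι ι ℂ) = E (a, c) (b, e) • 1 := by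
      rw [← hslice, hm (a, b), hm (c, e), conjTranspose_smul, Matrix.smul_mul, Matrix.mul_smul,
        smul_smul, ← star_eq_conjTranspose, mem_unitaryGroup_iff'.1 hu]
    exact smul_left_injective ℂ one_ne_zero hentry

end DressedTransfer

section Factorization

variable {d D : ℕ} {A : Fin d → Fin d → Matrix (Fin D) (Fin D) ℂ}
  {σ : Fin (d * d) → Matrix (Fin d) (Fin d) ℂ}

theorem uAspan_eq_range_dressedTransfer [NeZero d] (hσ : Submodule.span ℂ (Set.range σ) = ⊤) :
    uAspan d D A σ = LinearMap.range (dressedTransfer A) := by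
  let w (α : Fin (d * d)) : ℂˣ :=
    if (α : ℕ) = 0 then Units.mk0 (d : ℂ)⁻¹ (inv_ne_zero (NeZero.ne _)) else 1
  have hS : uS d D A σ = dressedTransfer A ∘ (w • σ) := by
    ext1 α
    have hw : (w α : ℂ) = if (α : ℕ) = 0 then (d : ℂ)⁻¹ else 1 :=
      (apply_ite _ _ _ _).trans rfl
    rw [Function.comp_apply, Pi.smul_apply', Units.smul_def, hw, map_smul]
    rfl
  rw [uAspan, hS, Set.range_comp, ← Submodule.map_span, Module.Basis.units_smul_span_eq_top hσ,
    Submodule.map_top]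

theorem SemiSimpleMPU.exists_isIrreducibleOn [NeZero d] {b : Matrix (Fin D) (Fin D) ℂ}
    (hss : SemiSimpleMPU d D A b σ) (hσ : Submodule.span ℂ (Set.range σ) = ⊤) :
    ∃ r : ℕ, ∃ U : Fin r → Submodule ℂ (Fin D × Fin D → ℂ),
      (∀ i, IsIrreducibleOn (Set.range fun X => toLin' (dressedTransfer A X)) (U i)) ∧
      ⨆ i, U i = ⊤ := by
  obtain ⟨-, P, hP, r, V, -, htop, hinv, hirr⟩ := hss
  have mem_uAspan (X) : dressedTransfer A X ∈ uAspan d D A σ :=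
    uAspan_eq_range_dressedTransfer hσ ▸ LinearMap.mem_range_self _ X
  let hinvertible : Invertible P := hP.invertible
  let e : (Fin D × Fin D → ℂ) ≃ₗ[ℂ] (Fin D × Fin D → ℂ) := toLinearEquiv' P hinvertible
  have he (S : Matrix (Fin D × Fin D) (Fin D × Fin D) ℂ) (v) :
      e.conj (toLin' S) v = (P * S * P⁻¹) *ᵥ v := by
    rw [← invOf_eq_nonsing_inv, ← mulVec_mulVec, ← mulVec_mulVec]
    rfl
  refine ⟨r, fun i => (V i).comap e.toLinearMap, fun i => .comap_equiv e ⟨?_, ?_⟩, ?_⟩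
  · rintro _ ⟨_, ⟨X, rfl⟩, rfl⟩ v hv
    simpa only [Submodule.mem_comap, he] using hinv _ (mem_uAspan X) i v hv
  · intro W hW hWinv
    refine hirr i W hW fun S hS v hv => ?_
    rw [uAspan_eq_range_dressedTransfer hσ] at hS
    obtain ⟨X, rfl⟩ := hS
    simpa only [Submodule.mem_comap, he] using
      hWinv _ (Set.mem_image_of_mem _ (Set.mem_range_self X)) hv
  · simp only [Submodule.comap_equiv_eq_map_symm]
    rw [← Submodule.map_iSup, htop, Submodule.map_top, LinearEquiv.range]

theorem exists_idempotent_dressedTransfer_eq_trace_smul [NeZero d]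
    (hU : ∀ N, 2 ≤ N → uMPO d D A 1 N ∈ unitaryGroup (Fin N → Fin d) ℂ)
    {ι : Sort*} {V : ι → Submodule ℂ (Fin D × Fin D → ℂ)}
    (hV : ∀ i, IsIrreducibleOn (Set.range fun X => toLin' (dressedTransfer A X)) (V i))
    (htop : ⨆ i, V i = ⊤) :
    ∃ E : Matrix (Fin D × Fin D) (Fin D × Fin D) ℂ, IsIdempotentElem E ∧ E.trace = 1 ∧
      ∀ X, dressedTransfer A X = X.trace • E := by
  let e : Matrix (Fin d) (Fin d) ℂ := (d : ℂ)⁻¹ • 1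
  have he : e.trace = 1 := by simp [e, NeZero.ne]
  have trace_prod (l : List (Matrix (Fin d) (Fin d) ℂ)) (hl : 2 ≤ l.length) :
      (l.map (dressedTransfer A)).prod.trace = (l.map Matrix.trace).prod :=
    trace_prod_map_dressedTransfer (hU _ hl)
  obtain ⟨hidem, hsmul⟩ := exists_idempotent_of_trace_list_prod_eq (fun l hl => by
    rw [← trace_prod l hl, ← trace_toLin'_eq]
    congr 1
    exact (List.map_map ▸ map_list_prod toLinAlgEquiv' (l.map (dressedTransfer A))).symm)
    hV htop he
  have hE : IsIdempotentElem (dressedTransfer A e) := toLin'.injective (by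
    rw [toLin'_mul]
    exact hidem.eq)
  refine ⟨dressedTransfer A e, hE, ?_, fun X => toLin'.injective ?_⟩
  · simpa [hE.eq, he] using trace_prod [e, e] le_rfl
  · rw [map_smul]
    exact hsmul X

theorem uProd_eq_prod_smul_pow {u : Matrix (Fin d) (Fin d) ℂ} {M : Matrix (Fin D) (Fin D) ℂ}
    (hA : ∀ i j, A i j = u i j • M) {N : ℕ} (i j : Fin N → Fin d) :
    uProd d D A N i j = (∏ k, u (i k) (j k)) • M ^ N := by
  induction N with
  | zero => simp [uProd]
  | succ N ih =>
    rw [uProd_succ, hA, ih, Fin.prod_univ_succ, Matrix.smul_mul, Matrix.mul_smul, smul_smul,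
      pow_succ']

theorem exists_unitary_uMPO_eq_prod [NeZero d]
    (hU : ∀ N, 2 ≤ N → uMPO d D A 1 N ∈ unitaryGroup (Fin N → Fin d) ℂ)
    {ι : Sort*} {V : ι → Submodule ℂ (Fin D × Fin D → ℂ)}
    (hV : ∀ i, IsIrreducibleOn (Set.range fun X => toLin' (dressedTransfer A X)) (V i))
    (htop : ⨆ i, V i = ⊤) :
    ∃ W ∈ unitaryGroup (Fin d) ℂ, ∀ N, N ≠ 0 → ∀ i j : Fin N → Fin d,
      uMPO d D A 1 N i j = ∏ k, W (i k) (j k) := by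
  obtain ⟨E, hidem, htrace, hE⟩ := exists_idempotent_dressedTransfer_eq_trace_smul hU hV htop
  obtain ⟨u, hu, M, hA, rfl⟩ := exists_unitary_smul_of_dressedTransfer hE
  obtain ⟨z, hz, hpow⟩ := exists_trace_pow_eq_pow hidem htrace
  have hz_unitary : z ∈ unitary ℂ := by
    rw [Unitary.mem_iff_star_mul_self, RCLike.star_def, RCLike.conj_mul, hz, RCLike.ofReal_one,
      one_pow]
  refine ⟨z • u, Unitary.smul_mem_of_mem hz_unitary hu, fun N hN i j => ?_⟩
  simp only [uMPO, of_apply, one_mul, uProd_eq_prod_smul_pow hA, trace_smul, hpow N hN,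
    Matrix.smul_apply, smul_eq_mul, Finset.prod_mul_distrib, Finset.prod_const,
    Finset.card_univ, Fintype.card_fin, mul_comm]

theorem stmt_9_general [NeZero d] (hσ : Submodule.span ℂ (Set.range σ) = ⊤)
    (hss : SemiSimpleMPU d D A 1 σ) :
    ∃ V ∈ unitaryGroup (Fin d) ℂ, ∀ N, N ≠ 0 → ∀ i j : Fin N → Fin d,
      uMPO d D A 1 N i j = ∏ k, V (i k) (j k) := by
  obtain ⟨r, U, hU, htop⟩ := hss.exists_isIrreducibleOn hσ
  exact exists_unitary_uMPO_eq_prod hss.1 hU htop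

end Factorization

/-- A semi-simple matrix-product unitary with periodic boundary
conditions (`b = 𝟙_D`) factorizes after blocking: there exist `q ≥ 1`, a phase `θ` and
a unitary `V` on `ℂ^{d^q}` such that `U_{qN} = e^{iθN} V^{⊗N}` for every `N ≥ 2`
(sites grouped into `N` consecutive blocks of `q`). -/
theorem stmt_9 (d D : ℕ) (hd : 2 ≤ d) (hD : 1 ≤ D)
    (A : Fin d → Fin d → Matrix (Fin D) (Fin D) ℂ)
    (σ : Fin (d * d) → Matrix (Fin d) (Fin d) ℂ)
    (hσ0 : ∀ α : Fin (d * d), (α : ℕ) = 0 → σ α = 1)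
    (hσherm : ∀ α : Fin (d * d), (α : ℕ) ≠ 0 → (σ α).IsHermitian)
    (hσtr : ∀ α : Fin (d * d), (α : ℕ) ≠ 0 → (σ α).trace = 0)
    (hσorth : ∀ α β : Fin (d * d), (α : ℕ) ≠ 0 → (β : ℕ) ≠ 0 →
      (σ α * σ β).trace = if α = β then 1 else 0)
    (hσbasis : Submodule.span ℂ (Set.range σ) = ⊤)
    (hss : SemiSimpleMPU d D A 1 σ) :
    ∃ q, 1 ≤ q ∧ ∃ θ : ℝ, ∃ V : Matrix (Fin q → Fin d) (Fin q → Fin d) ℂ,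
      V ∈ Matrix.unitaryGroup (Fin q → Fin d) ℂ ∧
      ∀ N, 2 ≤ N → ∀ i j : Fin (N * q) → Fin d,
        uMPO d D A 1 (N * q) i j =
          Complex.exp (θ * N * Complex.I) *
            ∏ t : Fin N,
              V (fun s => i (finProdFinEquiv (t, s))) (fun s => j (finProdFinEquiv (t, s))) := by
  have : NeZero d := ⟨by lia⟩
  obtain ⟨V, hV, hprod⟩ := stmt_9_general hσbasis hss
  refine ⟨1, le_rfl, 0, V.submatrix (Equiv.funUnique _ _) (Equiv.funUnique _ _),
    submatrix_equiv_mem_unitaryGroup hV _, fun N hN i j => ?_⟩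
  rw [hprod (N * 1) (by lia), ← finProdFinEquiv.prod_comp, Fintype.prod_prod_type]
  simp

end
end
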